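/- arXiv:2006.04402 — 11 statements merged into one kernel-verified Lean document; each statement's English description precedes it below -/
import Mathlib

section
/- Let S and T be valid configurations of n points each in ℝ². Then for every unit vector δ ∈ ℝ², except possibly for finitely many unit vectors, there exists a real number c > 0 such that, setting v = c • δ, the unlabeled reconfiguration problem from S to T + v is feasible. Formally: the set of unit vectors δ ∈ ℝ² for which no c > 0 makes the problem from S to T + c • δ feasible is finite. -/
open Metric

abbrev Pt : Type := EuclideanSpace ℝ (Fin 2)

/-- The ordered sequence of matched pairs `(s i, t i)` is a valid itinerary for
translation `v`: the unit disc moved at step `i` from `s i` to `t i + v` never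
overlaps the interior of a still-unmoved disc or an already-placed disc. -/
def ValidItinerary {n : ℕ} (s t : Fin n → Pt) (v : Pt) : Prop :=
  ∀ i : Fin n, ∀ x ∈ segment ℝ (s i) (t i + v),
    (∀ j : Fin n, i < j → 2 ≤ dist x (s j)) ∧
    (∀ j : Fin n, j < i → 2 ≤ dist x (t j + v))

/-- The unlabeled reconfiguration problem from `S` to `T'` is feasible: there are
enumerations of `S` and `T'` forming a valid itinerary for translation `0`. -/
def Feasible (n : ℕ) (S T' : Set Pt) : Prop :=
  ∃ s t : Fin n → Pt,
    Function.Injective s ∧ Function.Injective t ∧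
    Set.range s = S ∧ Set.range t = T' ∧
    ValidItinerary s t 0

/-!
If `δ` separates the points of `S`, and those of `T`, by their scalar products with `δ`, then for
all large `c` the discs can be moved in decreasing order along `δ`, the foremost disc of `S` to the
foremost position of `T + c • δ` and so on. Indeed every displacement is dominated by `c • δ`, so
it has a positive scalar product with the vector from any unmoved disc to the moving one, and the
distance between them only grows; reversing time gives the same for the placed discs.
In the plane only finitely many unit vectors are orthogonal to a difference of two distinct points
of `S` or of two distinct points of `T`.
-/

open Filter Module

section InnerProduct

variable {E : Type*} [NormedAddCommGroup E] [InnerProductSpace ℝ E]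

lemma norm_le_norm_add_of_inner_nonneg {x y : E} (h : 0 ≤ inner ℝ x y) : ‖x‖ ≤ ‖x + y‖ := by
  refine le_of_sq_le_sq ?_ (norm_nonneg _)
  rw [norm_add_sq_real]
  linarith [sq_nonneg ‖y‖]

lemma dist_le_dist_of_mem_segment_of_inner_nonneg {a b p x : E} (hx : x ∈ segment ℝ a b)
    (h : 0 ≤ inner ℝ (a - p) (b - a)) : dist a p ≤ dist x p := by
  rw [segment_eq_image'] at hx
  obtain ⟨θ, ⟨hθ, -⟩, rfl⟩ := hx
  rw [dist_eq_norm, dist_eq_norm, add_sub_right_comm]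
  apply norm_le_norm_add_of_inner_nonneg
  rw [real_inner_smul_right]
  exact mul_nonneg hθ h

lemma eventually_inner_add_smul_nonneg {x δ : E} (w : E) (h : 0 < inner ℝ x δ) :
    ∀ᶠ c : ℝ in atTop, 0 ≤ inner ℝ x (w + c • δ) := by
  simp only [inner_add_right, real_inner_smul_right]
  exact (tendsto_atTop_add_const_left _ _
    (tendsto_id.atTop_mul_const h)).eventually_ge_atTop 0

end InnerProduct

section FiniteDirections

lemma finite_sphere_zero_of_finrank_eq_one {E : Type*} [NormedAddCommGroup E] [NormedSpace ℝ E]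
    (hE : finrank ℝ E = 1) (r : ℝ) : (sphere (0 : E) r).Finite := by
  obtain ⟨e, he, hspan⟩ := finrank_eq_one_iff'.mp hE
  refine (Set.toFinite {(r / ‖e‖) • e, (-(r / ‖e‖)) • e}).subset fun x hx => ?_
  obtain ⟨a, rfl⟩ := hspan x
  have ha : |a| = r / ‖e‖ := by
    rw [eq_div_iff (norm_ne_zero_iff.mpr he), ← Real.norm_eq_abs, ← norm_smul]
    exact mem_sphere_zero_iff_norm.mp hx
  rcases eq_or_eq_neg_of_abs_eq ha with h | h <;> simp [h]

variable {E : Type*} [NormedAddCommGroup E] [InnerProductSpace ℝ E]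

lemma finite_setOf_norm_eq_inner_eq_zero (hE : finrank ℝ E = 2) {d : E} (hd : d ≠ 0) (r : ℝ) :
    {δ : E | ‖δ‖ = r ∧ inner ℝ d δ = 0}.Finite := by
  have : Fact (finrank ℝ E = 1 + 1) := ⟨hE⟩
  refine ((finite_sphere_zero_of_finrank_eq_one
    (Submodule.finrank_orthogonal_span_singleton hd) r).image Subtype.val).subset ?_
  rintro δ ⟨hδ, horth⟩
  exact ⟨⟨δ, Submodule.mem_orthogonal_singleton_iff_inner_right.mpr horth⟩,
    mem_sphere_zero_iff_norm.mpr hδ, rfl⟩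

lemma finite_setOf_norm_eq_not_injOn_inner (hE : finrank ℝ E = 2) {S : Set E} (hS : S.Finite)
    (r : ℝ) : {δ : E | ‖δ‖ = r ∧ ¬ Set.InjOn (inner ℝ δ) S}.Finite := by
  refine (hS.offDiag.biUnion fun x hx =>
    finite_setOf_norm_eq_inner_eq_zero hE (sub_ne_zero.mpr hx.2.2) r).subset ?_
  rintro δ ⟨hδ, hinj⟩
  simp only [Set.InjOn, not_forall] at hinj
  obtain ⟨p, hp, q, hq, heq, hne⟩ := hinj
  refine Set.mem_biUnion (x := (p, q)) ⟨hp, hq, hne⟩ ⟨hδ, ?_⟩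
  rw [real_inner_comm, inner_sub_right, heq, sub_self]

end FiniteDirections

lemma exists_range_eq_strictAnti_comp {α β : Type*} [LinearOrder β] {n : ℕ} {S : Finset α}
    (hn : S.card = n) {f : α → β} (hf : Set.InjOn f S) :
    ∃ s : Fin n → α, Set.range s = S ∧ StrictAnti (f ∘ s) := by
  let : LinearOrder S :=
    LinearOrder.lift' (fun p => OrderDual.toDual (f p)) hf.injective
  let e := Fintype.orderIsoFinOfCardEq S ((Fintype.card_coe S).trans hn)
  refine ⟨Subtype.val ∘ e, ?_, fun i j hij => e.strictMono hij⟩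
  rw [e.surjective.range_comp, Subtype.range_coe]

section Itinerary

variable {n : ℕ} {s t : Fin n → Pt}

lemma validItinerary_of_inner_nonneg {v : Pt} (hs : Pairwise fun i j => 2 ≤ dist (s i) (s j))
    (ht : Pairwise fun i j => 2 ≤ dist (t i) (t j))
    (hunmoved : ∀ i j, i < j → 0 ≤ inner ℝ (s i - s j) (t i + v - s i))
    (hplaced : ∀ i j, j < i → 0 ≤ inner ℝ (t j - t i) (t i + v - s i)) :
    ValidItinerary s t v := by
  refine fun i x hx => ⟨fun j hij => ?_, fun j hji => ?_⟩
  · exact (hs hij.ne).trans (dist_le_dist_of_mem_segment_of_inner_nonneg hx (hunmoved i j hij))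
  · have hreversed : 0 ≤ inner ℝ (t i + v - (t j + v)) (s i - (t i + v)) := by
      rw [add_sub_add_right_eq_sub, ← inner_neg_neg, neg_sub, neg_sub]
      exact hplaced i j hji
    calc 2 ≤ dist (t i) (t j) := ht hji.ne'
      _ = dist (t i + v) (t j + v) := (dist_add_right _ _ _).symm
      _ ≤ dist x (t j + v) := dist_le_dist_of_mem_segment_of_inner_nonneg
          (segment_symm ℝ (s i) (t i + v) ▸ hx) hreversed

lemma eventually_validItinerary_smul {δ : Pt} (hs : Pairwise fun i j => 2 ≤ dist (s i) (s j))
    (ht : Pairwise fun i j => 2 ≤ dist (t i) (t j))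
    (hsδ : StrictAnti (inner ℝ δ ∘ s)) (htδ : StrictAnti (inner ℝ δ ∘ t)) :
    ∀ᶠ c : ℝ in atTop, ValidItinerary s t (c • δ) := by
  have inner_sub_pos {u : Fin n → Pt} (hu : StrictAnti (inner ℝ δ ∘ u)) {i j : Fin n}
      (hij : i < j) : 0 < inner ℝ (u i - u j) δ := by
    rw [real_inner_comm, inner_sub_right]
    exact sub_pos.mpr (hu hij)
  have hunmoved : ∀ᶠ c : ℝ in atTop, ∀ i j, i < j →
      0 ≤ inner ℝ (s i - s j) (t i - s i + c • δ) := by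
    simp only [eventually_all]
    exact fun i j hij => eventually_inner_add_smul_nonneg _ (inner_sub_pos hsδ hij)
  have hplaced : ∀ᶠ c : ℝ in atTop, ∀ i j, j < i →
      0 ≤ inner ℝ (t j - t i) (t i - s i + c • δ) := by
    simp only [eventually_all]
    exact fun i j hji => eventually_inner_add_smul_nonneg _ (inner_sub_pos htδ hji)
  filter_upwards [hunmoved, hplaced] with c hc hc'
  simp only [sub_add_eq_add_sub] at hc hc'
  exact validItinerary_of_inner_nonneg hs ht hc hc'

lemma ValidItinerary.feasible {v : Pt} (h : ValidItinerary s t v) (hs : Function.Injective s)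
    (ht : Function.Injective t) : Feasible n (Set.range s) ((· + v) '' Set.range t) := by
  refine ⟨s, fun i => t i + v, hs, (add_left_injective v).comp ht, rfl,
    Set.range_comp (· + v) t, ?_⟩
  simpa only [ValidItinerary, add_zero] using h

end Itinerary

lemma eventually_feasible_add_smul {n : ℕ} {S T : Finset Pt} (hSn : S.card = n) (hTn : T.card = n)
    (hS : (S : Set Pt).Pairwise fun p q => 2 ≤ dist p q)
    (hT : (T : Set Pt).Pairwise fun p q => 2 ≤ dist p q) {δ : Pt}
    (hSδ : Set.InjOn (inner ℝ δ) S) (hTδ : Set.InjOn (inner ℝ δ) T) :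
    ∀ᶠ c : ℝ in atTop, Feasible n S ((· + c • δ) '' (T : Set Pt)) := by
  obtain ⟨s, hsS, hsδ⟩ := exists_range_eq_strictAnti_comp hSn hSδ
  obtain ⟨t, htT, htδ⟩ := exists_range_eq_strictAnti_comp hTn hTδ
  have hs : Function.Injective s := hsδ.injective.of_comp
  have ht : Function.Injective t := htδ.injective.of_comp
  rw [← hsS] at hS ⊢
  rw [← htT] at hT ⊢
  have hsep {u : Fin n → Pt} (hu : Function.Injective u)
      (h : (Set.range u).Pairwise fun p q => 2 ≤ dist p q) :
      Pairwise fun i j => 2 ≤ dist (u i) (u j) :=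
    fun i j hij => h (Set.mem_range_self i) (Set.mem_range_self j) (hu.ne hij)
  filter_upwards [eventually_validItinerary_smul (hsep hs hS) (hsep ht hT) hsδ htδ] with c hc
  exact hc.feasible hs ht

/-- For valid configurations `S` and `T` of `n` points each, the set of unit
directions `δ` for which no positive multiple `c • δ` yields a feasible unlabeled
reconfiguration problem from `S` to `T + c • δ` is finite. -/
theorem stmt0 (n : ℕ) (S T : Finset Pt)
    (hSn : S.card = n) (hTn : T.card = n)
    (hS : ∀ p ∈ S, ∀ q ∈ S, p ≠ q → 2 ≤ dist p q)
    (hT : ∀ p ∈ T, ∀ q ∈ T, p ≠ q → 2 ≤ dist p q) :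
    {δ : Pt | ‖δ‖ = 1 ∧
      ¬ ∃ c : ℝ, 0 < c ∧
        Feasible n (S : Set Pt) ((fun p => p + c • δ) '' (T : Set Pt))}.Finite := by
  have hdim : finrank ℝ Pt = 2 := finrank_euclideanSpace_fin
  refine ((finite_setOf_norm_eq_not_injOn_inner hdim S.finite_toSet 1).union
    (finite_setOf_norm_eq_not_injOn_inner hdim T.finite_toSet 1)).subset ?_
  rintro δ ⟨hδ, hinfeasible⟩
  by_contra hgeneric
  have hSδ : Set.InjOn (inner ℝ δ) (S : Set Pt) := by
    by_contra h
    exact hgeneric (Or.inl ⟨hδ, h⟩)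
  have hTδ : Set.InjOn (inner ℝ δ) (T : Set Pt) := by
    by_contra h
    exact hgeneric (Or.inr ⟨hδ, h⟩)
  exact hinfeasible ((eventually_gt_atTop 0).and
    (eventually_feasible_add_smul hSn hTn hS hT hSδ hTδ)).exists
end

section
/- Let S and T be valid configurations of n ≥ 1 points each in ℝ², and let r_S, r_T ≥ 0 be such that S ⊆ closedBall(0, r_S) and T ⊆ closedBall(0, r_T). Then there exists a translation v ∈ ℝ² with ‖v‖ ≤ (r_S + r_T + 2)·(1 + 8n) such that the unlabeled reconfiguration problem from S to T + v is feasible. -/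
open Metric

/-!
Translate `T` far away in a direction `u`, by `D • u`, and move the discs straight to their targets
in decreasing order of their components along `u`. All motions are then nearly parallel to `u`, so a
moving disc can only hit a waiting or an already placed disc if the two are nearly touching, and
their difference nearly orthogonal to `u`, in `S` or in `T`. By packing, there are at most `4 n`
nearly touching pairs in each configuration, and each such pair rules out at most one of `8 n + 1`
equally spaced directions.
-/

open scoped Real InnerProductSpace

/-- A valid configuration: a set of centers of closed unit discs with pairwise disjoint
interiors. -/
def IsConfiguration {X : Type*} [PseudoMetricSpace X] (A : Set X) : Prop :=
  A.Pairwise fun p q => 2 ≤ dist p q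

section Transverse

variable {E : Type*} [SeminormedAddCommGroup E] [InnerProductSpace ℝ E]

/-- The direction `u` is `κ`-transverse to `A`: no two points of `A` that are nearly touching (at
distance at most `9 / 4`) have a difference nearly orthogonal to `u`. The threshold `9 / 4` is small
enough for the packing bound `IsConfiguration.card_le_four`, and large enough for pairs beyond it to
need no transversality. -/
def IsTransverse (κ : ℝ) (u : E) (A : Set E) : Prop :=
  ∀ p ∈ A, ∀ q ∈ A, ‖p - q‖ ≤ 9 / 4 → ‖p - q‖ ≤ κ * |⟪p - q, u⟫_ℝ|

lemma one_sub_sq_mul_norm_sq_le_norm_add_smul_sq {d w : E} {c a : ℝ} (ha : 0 ≤ a)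
    (h : -(c * (‖d‖ * ‖w‖)) ≤ ⟪d, w⟫_ℝ) : (1 - c ^ 2) * ‖d‖ ^ 2 ≤ ‖d + a • w‖ ^ 2 := by
  calc (1 - c ^ 2) * ‖d‖ ^ 2
      ≤ (1 - c ^ 2) * ‖d‖ ^ 2 + (a * ‖w‖ - c * ‖d‖) ^ 2 := le_add_of_nonneg_right (sq_nonneg _)
    _ = ‖d‖ ^ 2 + 2 * (a * -(c * (‖d‖ * ‖w‖))) + a ^ 2 * ‖w‖ ^ 2 := by ring
    _ ≤ ‖d‖ ^ 2 + 2 * (a * ⟪d, w⟫_ℝ) + a ^ 2 * ‖w‖ ^ 2 := by gcongr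
    _ = ‖d + a • w‖ ^ 2 := by
      rw [norm_add_sq_real, inner_smul_right, norm_smul, mul_pow, Real.norm_eq_abs, sq_abs]

lemma IsTransverse.two_le_norm_sub_add_smul {A : Set E} {κ ρ D a : ℝ} {u p q z : E}
    (h : IsTransverse κ u A) (hA : IsConfiguration A) (hu : ‖u‖ = 1) (hκ : 9 ≤ κ)
    (hD : κ * ρ ≤ D) (hp : p ∈ A) (hq : q ∈ A) (hpq : p ≠ q) (hle : ⟪q, u⟫_ℝ ≤ ⟪p, u⟫_ℝ)
    (hz : ‖z‖ ≤ ρ) (ha : 0 ≤ a) : 2 ≤ ‖p - q + a • (D • u + z)‖ := by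
  have hρ : 0 ≤ ρ := (norm_nonneg z).trans hz
  have hd : 2 ≤ ‖p - q‖ := by simpa only [dist_eq_norm] using hA hp hq hpq
  have hdu : 0 ≤ ⟪p - q, u⟫_ℝ := by rwa [inner_sub_left, sub_nonneg]
  have hD9 : 9 * ρ ≤ D := (mul_le_mul_of_nonneg_right hκ hρ).trans hD
  have hinner : D * ⟪p - q, u⟫_ℝ - ρ * ‖p - q‖ ≤ ⟪p - q, D • u + z⟫_ℝ := by
    rw [inner_add_right, inner_smul_right]
    nlinarith [(abs_le.1 (abs_real_inner_le_norm (p - q) z)).1, norm_nonneg (p - q)]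
  rw [← sq_le_sq₀ zero_le_two (norm_nonneg _)]
  by_cases hnear : ‖p - q‖ ≤ 9 / 4
  · have hρd : ρ * ‖p - q‖ ≤ D * ⟪p - q, u⟫_ℝ := by
      calc ρ * ‖p - q‖ ≤ ρ * (κ * ⟪p - q, u⟫_ℝ) := by
            gcongr
            simpa only [abs_of_nonneg hdu] using h p hp q hq hnear
        _ = κ * ρ * ⟪p - q, u⟫_ℝ := by ring
        _ ≤ D * ⟪p - q, u⟫_ℝ := by gcongr
    have hangle : -(0 * (‖p - q‖ * ‖D • u + z‖)) ≤ ⟪p - q, D • u + z⟫_ℝ := by linarith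
    nlinarith [one_sub_sq_mul_norm_sq_le_norm_add_smul_sq ha hangle]
  · have hw : 8 * ρ ≤ ‖D • u + z‖ := by
      have hDu : ‖D • u‖ = D := by
        rw [norm_smul, hu, mul_one, Real.norm_of_nonneg (by linarith)]
      linarith [norm_sub_le_norm_add (D • u) z]
    have hDdu : 0 ≤ D * ⟪p - q, u⟫_ℝ := mul_nonneg (by linarith) hdu
    have hangle : -(1 / 8 * (‖p - q‖ * ‖D • u + z‖)) ≤ ⟪p - q, D • u + z⟫_ℝ := by
      nlinarith [norm_nonneg (p - q)]
    nlinarith [one_sub_sq_mul_norm_sq_le_norm_add_smul_sq ha hangle]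

end Transverse

lemma exists_injective_range_eq_antitone_comp {α β : Type*} [LinearOrder β] {n : ℕ}
    {A : Finset α} (hA : A.card = n) (f : α → β) :
    ∃ s : Fin n → α, Function.Injective s ∧ Set.range s = A ∧ Antitone (f ∘ s) := by
  let e : Fin n ≃ A := (A.equivFinOfCardEq hA).symm
  let g : Fin n → βᵒᵈ := fun i => OrderDual.toDual (f (e i))
  let σ : Fin n ≃ A := (Tuple.sort g).trans e
  refine ⟨fun i => σ i, Subtype.val_injective.comp σ.injective, ?_, Tuple.monotone_sort g⟩
  exact (σ.surjective.range_comp Subtype.val).trans Subtype.range_coe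

lemma validItinerary_add_smul {n : ℕ} {s t : Fin n → Pt} {κ ρ D : ℝ} {u : Pt}
    (hs : Function.Injective s) (ht : Function.Injective t)
    (hS : IsConfiguration (Set.range s)) (hT : IsConfiguration (Set.range t))
    (huS : IsTransverse κ u (Set.range s)) (huT : IsTransverse κ u (Set.range t))
    (hu : ‖u‖ = 1) (hκ : 9 ≤ κ) (hD : κ * ρ ≤ D) (hst : ∀ i, ‖t i - s i‖ ≤ ρ)
    (hsu : Antitone fun i => ⟪s i, u⟫_ℝ) (htu : Antitone fun i => ⟪t i, u⟫_ℝ) :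
    ValidItinerary s t (D • u) := by
  rintro i _ ⟨b, a, hb, ha, hab, rfl⟩
  obtain rfl : b = 1 - a := by linarith
  refine ⟨fun j hij => ?_, fun j hji => ?_⟩
  · have := huS.two_le_norm_sub_add_smul hS hu hκ hD ⟨i, rfl⟩ ⟨j, rfl⟩ (hs.ne hij.ne)
      (hsu hij.le) (hst i) ha
    rw [dist_eq_norm]
    refine this.trans_eq (congrArg norm ?_)
    module
  · have := huT.two_le_norm_sub_add_smul hT hu hκ hD ⟨j, rfl⟩ ⟨i, rfl⟩ (ht.ne hji.ne)
      (htu hji.le) (hst i) hb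
    rw [dist_comm, dist_eq_norm]
    refine this.trans_eq (congrArg norm ?_)
    module

theorem feasible_image_add_smul {n : ℕ} {S T : Finset Pt} {κ ρ D : ℝ} {u : Pt}
    (hSn : S.card = n) (hTn : T.card = n)
    (hS : IsConfiguration (S : Set Pt)) (hT : IsConfiguration (T : Set Pt))
    (huS : IsTransverse κ u (S : Set Pt)) (huT : IsTransverse κ u (T : Set Pt))
    (hu : ‖u‖ = 1) (hκ : 9 ≤ κ) (hD : κ * ρ ≤ D) (hST : ∀ p ∈ S, ∀ q ∈ T, ‖q - p‖ ≤ ρ) :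
    Feasible n (S : Set Pt) ((fun p => p + D • u) '' (T : Set Pt)) := by
  obtain ⟨s, hs, hsS, hsu⟩ := exists_injective_range_eq_antitone_comp hSn fun p => ⟪p, u⟫_ℝ
  obtain ⟨t, ht, htT, htu⟩ := exists_injective_range_eq_antitone_comp hTn fun p => ⟪p, u⟫_ℝ
  have hst : ∀ i, ‖t i - s i‖ ≤ ρ := fun i =>
    hST _ (Finset.mem_coe.1 (hsS ▸ Set.mem_range_self i))
      _ (Finset.mem_coe.1 (htT ▸ Set.mem_range_self i))
  rw [← hsS] at hS huS ⊢
  rw [← htT] at hT huT ⊢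
  have hvalid := validItinerary_add_smul hs ht hS hT huS huT hu hκ hD hst hsu htu
  refine ⟨s, fun i => t i + D • u, hs, (add_left_injective _).comp ht, rfl,
    Set.range_comp (· + D • u) t, ?_⟩
  simpa only [ValidItinerary, add_zero] using hvalid

/-- The point of the unit circle at angle `θ`. -/
noncomputable def unitVector (θ : ℝ) : Pt :=
  !₂[Real.cos θ, Real.sin θ]

/-- The polar angle of a vector of the plane, in `(-π, π]`. -/
noncomputable def polarAngle (d : Pt) : ℝ :=
  Complex.arg ⟨d 0, d 1⟩

lemma polarAngle_zero : polarAngle 0 = 0 :=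
  Complex.arg_zero

lemma inner_unitVector_unitVector (α β : ℝ) :
    ⟪unitVector α, unitVector β⟫_ℝ = Real.cos (α - β) := by
  simp [unitVector, PiLp.inner_apply, Fin.sum_univ_two, Real.cos_sub, mul_comm]

lemma norm_unitVector (θ : ℝ) : ‖unitVector θ‖ = 1 := by
  simp [unitVector, EuclideanSpace.norm_eq, Fin.sum_univ_two]

lemma norm_smul_unitVector_polarAngle (d : Pt) : ‖d‖ • unitVector (polarAngle d) = d := by
  have hnorm : ‖d‖ = ‖(⟨d 0, d 1⟩ : ℂ)‖ := by
    rw [EuclideanSpace.norm_eq, Complex.norm_def, Complex.normSq_apply]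
    simp [Fin.sum_univ_two, sq]
  ext i
  fin_cases i
  · simp [unitVector, polarAngle, hnorm]
  · simp [unitVector, polarAngle, hnorm]

lemma inner_unitVector (d : Pt) (θ : ℝ) :
    ⟪d, unitVector θ⟫_ℝ = ‖d‖ * Real.cos (polarAngle d - θ) := by
  conv_lhs => rw [← norm_smul_unitVector_polarAngle d]
  rw [real_inner_smul_left, inner_unitVector_unitVector]

lemma inner_eq_norm_mul_norm_mul_cos_polarAngle (d e : Pt) :
    ⟪d, e⟫_ℝ = ‖d‖ * ‖e‖ * Real.cos (polarAngle d - polarAngle e) := by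
  conv_lhs => rw [← norm_smul_unitVector_polarAngle e]
  rw [real_inner_smul_right, inner_unitVector]
  ring

lemma polarAngle_pos_or_polarAngle_neg_pos {d : Pt} (hd : d ≠ 0) :
    0 < polarAngle d ∨ 0 < polarAngle (-d) := by
  by_contra! ⟨hpos, hneg⟩
  have hlower : d 1 < 0 ∨ d 1 = 0 ∧ 0 < d 0 := by
    rcases hpos.lt_or_eq with hlt | heq
    · exact .inl (Complex.arg_neg_iff.1 hlt)
    · obtain ⟨h0, h1⟩ := Complex.arg_eq_zero_iff.1 heq
      refine .inr ⟨h1, lt_of_le_of_ne h0 fun h0' => hd ?_⟩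
      ext i
      fin_cases i
      · exact h0'.symm
      · exact h1
  have hadd : polarAngle (-d) = polarAngle d + π :=
    (Complex.arg_neg_eq_arg_add_pi_iff (x := ⟨d 0, d 1⟩)).2 hlower
  have : -π < polarAngle d := Complex.neg_pi_lt_arg _
  linarith

lemma two_thirds_le_cos_of_abs_le_pi_div_four {x : ℝ} (hx : |x| ≤ π / 4) :
    2 / 3 ≤ Real.cos x := by
  have hsqrt : 4 / 3 ≤ √(2 : ℝ) := Real.le_sqrt_of_sq_le (by norm_num)
  calc 2 / 3 ≤ √2 / 2 := by linarith
    _ = Real.cos (π / 4) := Real.cos_pi_div_four.symm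
    _ ≤ Real.cos |x| :=
      Real.cos_le_cos_of_nonneg_of_le_pi (abs_nonneg x) (by linarith [Real.pi_pos]) hx
    _ = Real.cos x := Real.cos_abs x

lemma norm_sub_lt_two_of_abs_polarAngle_sub_le {d e : Pt} (hd : 2 ≤ ‖d‖) (hd' : ‖d‖ ≤ 9 / 4)
    (he : 2 ≤ ‖e‖) (he' : ‖e‖ ≤ 9 / 4) (h : |polarAngle d - polarAngle e| ≤ π / 4) :
    ‖d - e‖ < 2 := by
  have hcos := two_thirds_le_cos_of_abs_le_pi_div_four h
  have hprod : 4 ≤ ‖d‖ * ‖e‖ := by nlinarith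
  have hsq : ‖d - e‖ ^ 2 < 2 ^ 2 := by
    rw [norm_sub_sq_real, inner_eq_norm_mul_norm_mul_cos_polarAngle]
    nlinarith
  exact lt_of_pow_lt_pow_left₀ 2 zero_le_two hsq

-- Each of the four sectors of angle `π / 4` contains at most one vector.
lemma IsConfiguration.card_le_four {V : Finset Pt} (hV : IsConfiguration (V : Set Pt))
    (h : ∀ d ∈ V, 2 ≤ ‖d‖ ∧ ‖d‖ ≤ 9 / 4 ∧ 0 < polarAngle d) : V.card ≤ 4 := by
  have hπ : 0 < π / 4 := by positivity
  have hmaps : Set.MapsTo (fun d => ⌈polarAngle d / (π / 4)⌉) V (Finset.Icc (1 : ℤ) 4) := by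
    intro d hd
    have hle : polarAngle d ≤ π := Complex.arg_le_pi _
    rw [Finset.mem_coe, Finset.mem_Icc, Int.one_le_ceil_iff, Int.ceil_le, div_le_iff₀ hπ]
    exact ⟨div_pos (h d hd).2.2 hπ, by push_cast; linarith⟩
  refine Finset.card_le_card_of_injOn _ hmaps fun d hd e he hde => ?_
  have hangle : |polarAngle d - polarAngle e| ≤ π / 4 := by
    have hceil : (⌈polarAngle d / (π / 4)⌉ : ℝ) = ⌈polarAngle e / (π / 4)⌉ := congrArg _ hde
    have habs : |polarAngle d / (π / 4) - polarAngle e / (π / 4)| ≤ 1 := by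
      rw [abs_sub_le_iff]
      constructor <;> linarith [Int.le_ceil (polarAngle d / (π / 4)),
        Int.le_ceil (polarAngle e / (π / 4)), Int.ceil_lt_add_one (polarAngle d / (π / 4)),
        Int.ceil_lt_add_one (polarAngle e / (π / 4))]
    rwa [← sub_div, abs_div, abs_of_pos hπ, div_le_one hπ] at habs
  obtain ⟨hd2, hd', -⟩ := h d hd
  obtain ⟨he2, he', -⟩ := h e he
  by_contra hne
  exact (hV hd he hne).not_gt <| by
    simpa only [dist_eq_norm] using
      norm_sub_lt_two_of_abs_polarAngle_sub_le hd2 hd' he2 he' hangle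

/-- The differences of nearly touching points of `A` (at distance at most `9 / 4`), one for each
unordered pair: the one with polar angle in `(0, π]`. -/
noncomputable def shortDifferences (A : Finset Pt) : Finset Pt :=
  open scoped Classical in
  A.biUnion fun p => {d ∈ (A.erase p).image (· - p) | ‖d‖ ≤ 9 / 4 ∧ 0 < polarAngle d}

lemma sub_mem_shortDifferences {A : Finset Pt} {p q : Pt} (hp : p ∈ A) (hq : q ∈ A)
    (hpq : ‖q - p‖ ≤ 9 / 4) (hpos : 0 < polarAngle (q - p)) : q - p ∈ shortDifferences A := by
  have hne : q ≠ p := by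
    rintro rfl
    exact hpos.ne' (by rw [sub_self, polarAngle_zero])
  simp only [shortDifferences, Finset.mem_biUnion, Finset.mem_filter, Finset.mem_image,
    Finset.mem_erase]
  exact ⟨p, hp, ⟨q, ⟨hne, hq⟩, rfl⟩, hpq, hpos⟩

lemma IsConfiguration.card_shortDifferences_le {A : Finset Pt}
    (hA : IsConfiguration (A : Set Pt)) : (shortDifferences A).card ≤ A.card * 4 := by
  classical
  refine Finset.card_biUnion_le_card_mul _ _ _ fun p hp => IsConfiguration.card_le_four ?_ ?_
  · intro d hd e he hde
    simp only [Finset.mem_coe, Finset.mem_filter, Finset.mem_image, Finset.mem_erase] at hd he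
    obtain ⟨⟨q, ⟨-, hq⟩, rfl⟩, -⟩ := hd
    obtain ⟨⟨r, ⟨-, hr⟩, rfl⟩, -⟩ := he
    simpa only [dist_sub_right] using hA hq hr (ne_of_apply_ne (· - p) hde)
  · intro d hd
    simp only [Finset.mem_filter, Finset.mem_image, Finset.mem_erase] at hd
    obtain ⟨⟨q, ⟨hqp, hq⟩, rfl⟩, hd⟩ := hd
    exact ⟨by simpa only [dist_eq_norm] using hA hq hp hqp, hd⟩

lemma isTransverse_of_forall_mem_shortDifferences {A : Finset Pt} {κ : ℝ} {u : Pt}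
    (h : ∀ d ∈ shortDifferences A, ‖d‖ ≤ κ * |⟪d, u⟫_ℝ|) : IsTransverse κ u (A : Set Pt) := by
  intro p hp q hq hpq
  rcases eq_or_ne (p - q) 0 with h0 | h0
  · simp [h0]
  rcases polarAngle_pos_or_polarAngle_neg_pos h0 with hpos | hpos
  · exact h _ (sub_mem_shortDifferences hq hp hpq hpos)
  · rw [neg_sub] at hpos
    rw [norm_sub_rev] at hpq
    simpa only [norm_sub_rev q p, ← neg_sub p q, inner_neg_left, abs_neg, norm_neg] using
      h _ (sub_mem_shortDifferences hp hq hpq hpos)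

lemma two_div_pi_mul_le_sin {δ x : ℝ} (hδ : 0 ≤ δ) (hδx : δ ≤ x) (hxδ : x ≤ π - δ) :
    2 / π * δ ≤ Real.sin x := by
  rcases le_total x (π / 2) with hx | hx
  · calc 2 / π * δ ≤ 2 / π * x := by gcongr
      _ ≤ Real.sin x := Real.mul_le_sin (hδ.trans hδx) hx
  · calc 2 / π * δ ≤ 2 / π * (π - x) := by gcongr; linarith
      _ ≤ Real.sin (π - x) := Real.mul_le_sin (by linarith) (by linarith)
      _ = Real.sin x := Real.sin_pi_sub x

lemma two_div_le_abs_sin_mul_sub_mul {N k l : ℕ} (hk : k < N) (hl : l < N) (hkl : k ≠ l) :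
    2 / N ≤ |Real.sin (k * (π / N) - l * (π / N))| := by
  wlog hlt : l < k generalizing k l
  · rw [← abs_neg, ← Real.sin_neg, neg_sub]
    exact this hl hk hkl.symm (by lia)
  have hN : (0 : ℝ) < N := by exact_mod_cast (by lia : 0 < N)
  have hδ : 0 ≤ π / N := by positivity
  have hlk : (l : ℝ) + 1 ≤ k := by exact_mod_cast hlt
  have hkN : (k : ℝ) + 1 ≤ N := by exact_mod_cast hk
  have hπ : π = N * (π / N) := by field_simp
  have hsin := two_div_pi_mul_le_sin (x := k * (π / N) - l * (π / N)) hδ (by nlinarith)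
    (by nlinarith)
  calc (2 : ℝ) / N = 2 / π * (π / N) := by field_simp
    _ ≤ _ := hsin.trans (le_abs_self _)

lemma abs_sin_sub_le_abs_cos_add_abs_cos (φ α β : ℝ) :
    |Real.sin (α - β)| ≤ |Real.cos (φ - α)| + |Real.cos (φ - β)| := by
  have hsin : Real.sin (α - β) = Real.sin (φ - β) * Real.cos (φ - α)
      - Real.cos (φ - β) * Real.sin (φ - α) := by
    rw [← Real.sin_sub, sub_sub_sub_cancel_left]
  calc |Real.sin (α - β)|
      ≤ |Real.sin (φ - β)| * |Real.cos (φ - α)| + |Real.cos (φ - β)| * |Real.sin (φ - α)| := by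
        rw [hsin, ← abs_mul, ← abs_mul]
        exact abs_sub _ _
    _ ≤ 1 * |Real.cos (φ - α)| + |Real.cos (φ - β)| * 1 := by
        gcongr <;> exact Real.abs_sin_le_one _
    _ = |Real.cos (φ - α)| + |Real.cos (φ - β)| := by ring

-- Among `N = #F + 1` directions at angles `k * (π / N)`, each vector of `F` rules out at most one.
theorem exists_norm_eq_one_forall_norm_le_mul_abs_inner (F : Finset Pt) :
    ∃ u : Pt, ‖u‖ = 1 ∧ ∀ d ∈ F, ‖d‖ ≤ (F.card + 1) * |⟪d, u⟫_ℝ| := by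
  by_contra! hbad
  set N : ℕ := F.card + 1 with hN
  choose! d hdF hd using fun k : ℕ => hbad (unitVector (k * (π / N))) (norm_unitVector _)
  obtain ⟨k, hk, l, hl, hkl, hdkl⟩ := Finset.exists_ne_map_eq_of_card_lt_of_maps_to
    (s := Finset.range N) (t := F) (f := d) (by simp [hN]) fun k _ => hdF k
  have hNpos : (0 : ℝ) < N := by positivity
  have hcos : ∀ k, |Real.cos (polarAngle (d k) - k * (π / N))| < 1 / N := by
    intro k
    have hlt : N * (‖d k‖ * |Real.cos (polarAngle (d k) - k * (π / N))|) < ‖d k‖ := by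
      simpa [hN, inner_unitVector, abs_mul] using hd k
    rw [lt_div_iff₀ hNpos]
    nlinarith [norm_nonneg (d k)]
  have hcosk := hcos k
  rw [hdkl] at hcosk
  have hsin := two_div_le_abs_sin_mul_sub_mul (Finset.mem_range.1 hk) (Finset.mem_range.1 hl) hkl
  have hsum : (2 : ℝ) / N = 1 / N + 1 / N := by ring
  linarith [hcos l, abs_sin_sub_le_abs_cos_add_abs_cos (polarAngle (d l)) (k * (π / N))
    (l * (π / N))]

theorem exists_isTransverse_and_isTransverse {S T : Finset Pt}
    (hS : IsConfiguration (S : Set Pt)) (hT : IsConfiguration (T : Set Pt)) :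
    ∃ u : Pt, ‖u‖ = 1 ∧ IsTransverse (4 * (S.card + T.card) + 1) u (S : Set Pt) ∧
      IsTransverse (4 * (S.card + T.card) + 1) u (T : Set Pt) := by
  classical
  obtain ⟨u, hu, h⟩ := exists_norm_eq_one_forall_norm_le_mul_abs_inner
    (shortDifferences S ∪ shortDifferences T)
  have hcard : ((shortDifferences S ∪ shortDifferences T).card : ℝ) ≤ 4 * (S.card + T.card) := by
    norm_cast
    linarith [Finset.card_union_le (shortDifferences S) (shortDifferences T),
      hS.card_shortDifferences_le, hT.card_shortDifferences_le]
  have hle : ∀ d ∈ shortDifferences S ∪ shortDifferences T,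
      ‖d‖ ≤ (4 * (S.card + T.card) + 1) * |⟪d, u⟫_ℝ| := fun d hd =>
    (h d hd).trans (by gcongr)
  exact ⟨u, hu,
    isTransverse_of_forall_mem_shortDifferences fun d hd => hle d (Finset.mem_union_left _ hd),
    isTransverse_of_forall_mem_shortDifferences fun d hd => hle d (Finset.mem_union_right _ hd)⟩

/-- For valid configurations `S` and `T` of `n ≥ 1` points, contained in closed
balls of radii `rS`, `rT` around the origin, there is a translation `v` of length
at most `(rS + rT + 2)·(1 + 8n)` making the unlabeled problem from `S` to `T + v`
feasible. -/
theorem stmt1 (n : ℕ) (hn : 1 ≤ n) (S T : Finset Pt) (rS rT : ℝ)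
    (hrS : 0 ≤ rS) (hrT : 0 ≤ rT)
    (hSn : S.card = n) (hTn : T.card = n)
    (hS : ∀ p ∈ S, ∀ q ∈ S, p ≠ q → 2 ≤ dist p q)
    (hT : ∀ p ∈ T, ∀ q ∈ T, p ≠ q → 2 ≤ dist p q)
    (hSb : (S : Set Pt) ⊆ closedBall 0 rS)
    (hTb : (T : Set Pt) ⊆ closedBall 0 rT) :
    ∃ v : Pt, ‖v‖ ≤ (rS + rT + 2) * (1 + 8 * n) ∧
      Feasible n (S : Set Pt) ((fun p => p + v) '' (T : Set Pt)) := by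
  have hS' : IsConfiguration (S : Set Pt) := fun p hp q hq => hS p hp q hq
  have hT' : IsConfiguration (T : Set Pt) := fun p hp q hq => hT p hp q hq
  obtain ⟨u, hu, huS, huT⟩ := exists_isTransverse_and_isTransverse hS' hT'
  have hκ : (4 * (S.card + T.card) + 1 : ℝ) = 1 + 8 * n := by rw [hSn, hTn]; ring
  rw [hκ] at huS huT
  have hn' : (1 : ℝ) ≤ n := by exact_mod_cast hn
  have hST : ∀ p ∈ S, ∀ q ∈ T, ‖q - p‖ ≤ rS + rT := fun p hp q hq => by
    have hp' : ‖p‖ ≤ rS := mem_closedBall_zero_iff.1 (hSb hp)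
    have hq' : ‖q‖ ≤ rT := mem_closedBall_zero_iff.1 (hTb hq)
    linarith [norm_sub_le q p]
  refine ⟨((rS + rT + 2) * (1 + 8 * n)) • u, ?_, ?_⟩
  · rw [norm_smul, hu, mul_one, Real.norm_of_nonneg (by positivity)]
  · exact feasible_image_add_smul hSn hTn hS' hT' huS huT hu (by linarith) (by nlinarith) hST
end

section
/- There exists an absolute constant C > 0 with the following property. Let ε ∈ (0,1], and let S and T be valid configurations of n ≥ 1 points each in ℝ² such that any two distinct points of S, and any two distinct points of T, are at distance at least 2 + ε; let r_S, r_T ≥ 0 be such that S ⊆ closedBall(0, r_S) and T ⊆ closedBall(0, r_T). Then for every unit vector δ ∈ ℝ² there exists c with 0 < c ≤ C·(r_S + r_T + 2)/√ε such that the unlabeled reconfiguration problem from S to T + c • δ is feasible. -/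
open Metric

/-!
Serve both configurations in decreasing order of their component along `δ`. Then every disc that
must be avoided lies weakly behind the moving one, seen from the start of the motion (unmoved
discs) or, running the motion backwards, from its end (placed discs). A long translation makes
every motion almost parallel to `δ`, so the obstacle is seen at an angle whose cosine is at most
some small `k`. At distance at least `D` from the apex it is then at distance at least
`√(1 - k ^ 2) * D` from the path, which is `2` for the right `k`. For `D = 2 + ε` with `ε ≤ 1`
this `k` is at least `√ε / 2`, and a translation of length `R + R / k` makes the cosines at most
`k` when matched points are at distance at most `R`.
-/

theorem exists_enum_antitone {α β : Type*} [LinearOrder β] {n : ℕ} {S : Finset α}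
    (hS : S.card = n) (f : α → β) :
    ∃ s : Fin n → α, Function.Injective s ∧ Set.range s = S ∧ Antitone (f ∘ s) := by
  let e : Fin n ≃ S := (S.equivFinOfCardEq hS).symm
  let σ : Equiv.Perm (Fin n) := Tuple.sort fun i => OrderDual.toDual (f (e i))
  refine ⟨fun i => (σ.trans e i : α), Subtype.val_injective.comp (σ.trans e).injective, ?_,
    Tuple.monotone_sort fun i => OrderDual.toDual (f (e i))⟩
  exact ((σ.trans e).surjective.range_comp Subtype.val).trans Subtype.range_coe

section InnerProductSpace

variable {E : Type*} [NormedAddCommGroup E] [InnerProductSpace ℝ E]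

theorem mul_norm_le_norm_sub_smul {k σ l : ℝ} {d w : E} (hkσ : k ^ 2 + σ ^ 2 = 1) (hl : 0 ≤ l)
    (hdw : inner ℝ d w ≤ k * (‖d‖ * ‖w‖)) : σ * ‖d‖ ≤ ‖d - l • w‖ := by
  refine le_of_sq_le_sq ?_ (norm_nonneg _)
  calc (σ * ‖d‖) ^ 2 ≤ (l * ‖w‖ - k * ‖d‖) ^ 2 + (σ * ‖d‖) ^ 2 := by
        linarith [sq_nonneg (l * ‖w‖ - k * ‖d‖)]
    _ = ‖d‖ ^ 2 - 2 * (l * (k * (‖d‖ * ‖w‖))) + l ^ 2 * ‖w‖ ^ 2 := by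
        linear_combination ‖d‖ ^ 2 * hkσ
    _ ≤ ‖d‖ ^ 2 - 2 * (l * inner ℝ d w) + l ^ 2 * ‖w‖ ^ 2 := by gcongr
    _ = ‖d - l • w‖ ^ 2 := by
        rw [norm_sub_sq_real, inner_smul_right, norm_smul, mul_pow, Real.norm_eq_abs, sq_abs]

theorem mul_dist_le_dist_of_mem_segment {k σ : ℝ} {p q r x : E} (hkσ : k ^ 2 + σ ^ 2 = 1)
    (hq : inner ℝ (q - p) (r - p) ≤ k * (‖q - p‖ * ‖r - p‖)) (hx : x ∈ segment ℝ p r) :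
    σ * dist p q ≤ dist x q := by
  rw [segment_eq_image'] at hx
  obtain ⟨l, ⟨hl, -⟩, rfl⟩ := hx
  rw [dist_comm p, dist_comm _ q, dist_eq_norm, dist_eq_norm, ← sub_sub]
  exact mul_norm_le_norm_sub_smul hkσ hl hq

theorem inner_le_of_norm_sub_smul_le {k R c : ℝ} {d u δ : E} (hk : 0 < k)
    (hR : R ≤ k * (c - R)) (hδ : ‖δ‖ = 1) (hu : ‖u - c • δ‖ ≤ R) (hd : inner ℝ d δ ≤ 0) :
    inner ℝ d u ≤ k * (‖d‖ * ‖u‖) := by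
  have hR₀ : 0 ≤ R := (norm_nonneg _).trans hu
  have hRc : 0 ≤ c - R := nonneg_of_mul_nonneg_right (hR₀.trans hR) hk
  have hc : 0 ≤ c := by linarith
  have hcu : c - R ≤ ‖u‖ := by
    have h := norm_le_norm_add_norm_sub u (c • δ)
    rw [norm_smul, hδ, mul_one, Real.norm_of_nonneg hc] at h
    linarith
  calc inner ℝ d u = c * inner ℝ d δ + inner ℝ d (u - c • δ) := by
        rw [inner_sub_right, inner_smul_right, add_sub_cancel]
    _ ≤ 0 + ‖d‖ * ‖u - c • δ‖ :=
        add_le_add (mul_nonpos_of_nonneg_of_nonpos hc hd) (real_inner_le_norm _ _)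
    _ ≤ ‖d‖ * (k * ‖u‖) := by
        rw [zero_add]
        gcongr
        exact hu.trans (hR.trans (by gcongr))
    _ = k * (‖d‖ * ‖u‖) := mul_left_comm _ _ _

/-- Valid itineraries of unit discs in any real inner product space. Unlike in `ValidItinerary`,
the translation is already included in the targets `t`. -/
def IsItinerary {ι : Type*} [LT ι] (s t : ι → E) : Prop :=
  ∀ i, ∀ x ∈ segment ℝ (s i) (t i),
    (∀ j, i < j → 2 ≤ dist x (s j)) ∧ (∀ j, j < i → 2 ≤ dist x (t j))

/-- Feasibility of the unlabeled reconfiguration problem from `S` to `T` for `n` unit discs in any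
real inner product space; `Feasible` is the planar case. -/
def IsReconfigurable (n : ℕ) (S T : Set E) : Prop :=
  ∃ s t : Fin n → E, Function.Injective s ∧ Function.Injective t ∧
    Set.range s = S ∧ Set.range t = T ∧ IsItinerary s t

theorem isItinerary_add_smul_of_antitone {ι : Type*} [Preorder ι] {k σ D R c : ℝ} {δ : E}
    {s t : ι → E} (hk : 0 < k) (hσ : 0 ≤ σ) (hkσ : k ^ 2 + σ ^ 2 = 1) (hσD : 2 ≤ σ * D)
    (hR : R ≤ k * (c - R)) (hδ : ‖δ‖ = 1)
    (hs : Pairwise fun i j => D ≤ dist (s i) (s j))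
    (ht : Pairwise fun i j => D ≤ dist (t i) (t j))
    (hst : ∀ i, dist (s i) (t i) ≤ R)
    (hsδ : Antitone fun i => inner ℝ (s i) δ) (htδ : Antitone fun i => inner ℝ (t i) δ) :
    IsItinerary s fun i => t i + c • δ := by
  have clearance {p q r x v : E} (hv : ‖v‖ = 1) (hu : ‖(r - p) - c • v‖ ≤ R)
      (hpq : D ≤ dist p q) (hq : inner ℝ (q - p) v ≤ 0) (hx : x ∈ segment ℝ p r) :
      2 ≤ dist x q :=
    calc 2 ≤ σ * D := hσD
      _ ≤ σ * dist p q := by gcongr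
      _ ≤ dist x q := mul_dist_le_dist_of_mem_segment hkσ
          (inner_le_of_norm_sub_smul_le hk hR hv hu hq) hx
  refine fun i x hx => ⟨fun j hij => ?_, fun j hji => ?_⟩
  · refine clearance hδ ?_ (hs hij.ne) ?_ hx
    · rw [sub_right_comm, add_sub_cancel_right, ← dist_eq_norm']
      exact hst i
    · rw [inner_sub_left]
      exact sub_nonpos.2 (hsδ hij.le)
  · refine clearance (v := -δ) (by rwa [norm_neg]) ?_ ?_ ?_ (segment_symm ℝ (s i) _ ▸ hx)
    · rw [smul_neg, sub_neg_eq_add, ← sub_sub, sub_add_cancel, ← dist_eq_norm]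
      exact hst i
    · rw [dist_add_right]
      exact ht hji.ne'
    · rw [add_sub_add_right_eq_sub, inner_neg_right, inner_sub_left, neg_sub]
      exact sub_nonpos.2 (htδ hji.le)

theorem stmt2_general {n : ℕ} {S T : Finset E} {D R c : ℝ} {δ : E} (hD : 2 < D)
    (hSn : S.card = n) (hTn : T.card = n)
    (hS : (S : Set E).Pairwise fun p q => D ≤ dist p q)
    (hT : (T : Set E).Pairwise fun p q => D ≤ dist p q)
    (hST : ∀ p ∈ S, ∀ q ∈ T, dist p q ≤ R)
    (hδ : ‖δ‖ = 1) (hc : R + R / √(1 - (2 / D) ^ 2) ≤ c) :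
    IsReconfigurable n (S : Set E) ((fun p => p + c • δ) '' (T : Set E)) := by
  obtain ⟨s, hs, hsS, hsδ⟩ := exists_enum_antitone hSn fun p => inner ℝ p δ
  obtain ⟨t, ht, htT, htδ⟩ := exists_enum_antitone hTn fun p => inner ℝ p δ
  have hsmem (i) : s i ∈ (S : Set E) := hsS ▸ Set.mem_range_self i
  have htmem (i) : t i ∈ (T : Set E) := htT ▸ Set.mem_range_self i
  have hD₀ : 0 < D := two_pos.trans hD
  have hσ : (2 / D) ^ 2 < 1 := pow_lt_one₀ (by positivity) ((div_lt_one hD₀).2 hD) two_ne_zero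
  have hk : 0 < √(1 - (2 / D) ^ 2) := Real.sqrt_pos.2 (sub_pos.2 hσ)
  refine ⟨s, fun i => t i + c • δ, hs, (add_left_injective _).comp ht, hsS, ?_,
    isItinerary_add_smul_of_antitone hk (by positivity : 0 ≤ 2 / D) ?_
      (div_mul_cancel₀ 2 hD₀.ne').ge ?_ hδ (fun i j hij => hS (hsmem i) (hsmem j) (hs.ne hij))
      (fun i j hij => hT (htmem i) (htmem j) (ht.ne hij))
      (fun i => hST _ (hsmem i) _ (htmem i)) hsδ htδ⟩
  · rw [← htT, ← Set.range_comp, Function.comp_def]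
  · rw [Real.sq_sqrt (sub_nonneg.2 hσ.le), sub_add_cancel]
  · exact (div_le_iff₀' hk).1 (le_sub_iff_add_le'.2 hc)

end InnerProductSpace

theorem feasible_iff_isReconfigurable {n : ℕ} {S T : Set Pt} :
    Feasible n S T ↔ IsReconfigurable n S T := by
  simp only [Feasible, ValidItinerary, IsReconfigurable, IsItinerary, add_zero]

theorem sqrt_div_two_le {ε : ℝ} (hε : 0 < ε) (hε₁ : ε ≤ 1) :
    √ε / 2 ≤ √(1 - (2 / (2 + ε)) ^ 2) := by
  refine Real.le_sqrt_of_sq_le ?_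
  rw [div_pow, Real.sq_sqrt hε.le, div_pow, le_sub_iff_add_le', ← le_sub_iff_add_le,
    div_le_iff₀ (by positivity)]
  have hε₃ : ε ^ 3 ≤ ε := pow_le_of_le_one hε.le hε₁ three_ne_zero
  linear_combination hε₃ / 4 + 11 / 4 * hε

theorem add_div_sqrt_le {R ε : ℝ} (hR : 0 ≤ R) (hε : 0 < ε) (hε₁ : ε ≤ 1) :
    R + R / √(1 - (2 / (2 + ε)) ^ 2) ≤ 3 * R / √ε := by
  have hsqrt : 0 < √ε := Real.sqrt_pos.2 hε
  calc R + R / √(1 - (2 / (2 + ε)) ^ 2) ≤ R / √ε + R / (√ε / 2) := by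
        gcongr
        · exact le_div_self hR hsqrt (Real.sqrt_le_one.2 hε₁)
        · exact sqrt_div_two_le hε hε₁
    _ = 3 * R / √ε := by
        field_simp
        norm_num

/-- There is an absolute constant `C > 0` such that for `(2+ε)`-separated valid
configurations `S`, `T` of `n ≥ 1` points contained in balls of radii `rS`, `rT`,
every unit direction `δ` admits a valid translation `c • δ` with
`0 < c ≤ C·(rS + rT + 2)/√ε`. -/
theorem stmt2 :
    ∃ C : ℝ, 0 < C ∧
      ∀ ε : ℝ, 0 < ε → ε ≤ 1 →
      ∀ n : ℕ, 1 ≤ n →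
      ∀ S T : Finset Pt, ∀ rS rT : ℝ, 0 ≤ rS → 0 ≤ rT →
      S.card = n → T.card = n →
      (∀ p ∈ S, ∀ q ∈ S, p ≠ q → 2 + ε ≤ dist p q) →
      (∀ p ∈ T, ∀ q ∈ T, p ≠ q → 2 + ε ≤ dist p q) →
      (S : Set Pt) ⊆ closedBall 0 rS →
      (T : Set Pt) ⊆ closedBall 0 rT →
      ∀ δ : Pt, ‖δ‖ = 1 →
      ∃ c : ℝ, 0 < c ∧ c ≤ C * (rS + rT + 2) / Real.sqrt ε ∧
        Feasible n (S : Set Pt) ((fun p => p + c • δ) '' (T : Set Pt)) := by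
  refine ⟨3, three_pos, fun ε hε hε₁ n _ S T rS rT hrS hrT hSn hTn hS hT hSr hTr δ hδ =>
    ⟨3 * (rS + rT + 2) / √ε, by positivity, le_rfl, feasible_iff_isReconfigurable.2 ?_⟩⟩
  have hST : ∀ p ∈ S, ∀ q ∈ T, dist p q ≤ rS + rT := fun p hp q hq =>
    (dist_triangle_right p q 0).trans (add_le_add (hSr hp) (hTr hq))
  have hc : (rS + rT) + (rS + rT) / √(1 - (2 / (2 + ε)) ^ 2) ≤ 3 * (rS + rT + 2) / √ε := by
    refine (add_div_sqrt_le (by positivity) hε hε₁).trans ?_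
    gcongr 3 * ?_ / _
    linarith
  exact stmt2_general (lt_add_of_pos_right 2 hε) hSn hTn (fun p hp q hq => hS p hp q hq)
    (fun p hp q hq => hT p hp q hq) hST hδ hc
end

section
/- Let s, t : Fin n → ℝ² and v ∈ ℝ² be such that the points s i have pairwise distances at least 2 and the points t i + v have pairwise distances at least 2. Define the blocking relation B on Fin n by: B i j holds iff i ≠ j and either some point of the closed segment from s j to t j + v is at distance < 2 from s i, or some point of the closed segment from s i to t i + v is at distance < 2 from t j + v. Then there exists a permutation σ of Fin n such that the sequence (s σ(1), t σ(1)), …, (s σ(n), t σ(n)) is a valid itinerary for translation v if and only if B has no directed cycle (equivalently, the transitive closure of B is irreflexive). -/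
/-!
An ordering is a valid itinerary exactly when it lists every blocker before what it blocks, that
is, when it is a topological sort of the blocking relation. Listing by well-founded rank gives such
a sort whenever there is no cycle.
-/

open Metric

/-- The blocking relation of the translation `v`: moving the disc `j` before the disc `i` would
make one of them overlap the other, so every valid itinerary has to move `i` first. -/
def Blocks {ι : Type*} (s t : ι → Pt) (v : Pt) (i j : ι) : Prop :=
  i ≠ j ∧
    ((∃ x ∈ segment ℝ (s j) (t j + v), dist x (s i) < 2) ∨
     (∃ x ∈ segment ℝ (s i) (t i + v), dist x (t j + v) < 2))

theorem blocks_comp_iff {ι κ : Type*} {s t : ι → Pt} {v : Pt} {f : κ → ι}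
    (hf : Function.Injective f) {i j : κ} :
    Blocks (s ∘ f) (t ∘ f) v i j ↔ Blocks s t v (f i) (f j) :=
  and_congr_left' hf.ne_iff.symm

theorem validItinerary_iff_blocks_imp_lt {n : ℕ} {s t : Fin n → Pt} {v : Pt} :
    ValidItinerary s t v ↔ ∀ i j, Blocks s t v i j → i < j := by
  constructor
  · rintro hvalid i j ⟨hne, hblock⟩
    by_contra hij
    have hji : j < i := lt_of_le_of_ne (not_lt.mp hij) hne.symm
    rcases hblock with ⟨x, hx, hdist⟩ | ⟨x, hx, hdist⟩
    · exact hdist.not_ge ((hvalid j x hx).1 i hji)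
    · exact hdist.not_ge ((hvalid i x hx).2 j hji)
  · intro hlt i x hx
    refine ⟨fun j hij => ?_, fun j hji => ?_⟩ <;> by_contra! hdist
    · exact hij.asymm (hlt j i ⟨hij.ne', .inl ⟨x, hx, hdist⟩⟩)
    · exact hji.asymm (hlt i j ⟨hji.ne', .inr ⟨x, hx, hdist⟩⟩)

theorem not_transGen_self_of_map_lt {α β : Type*} [Preorder β] {r : α → α → Prop} {f : α → β}
    (hf : ∀ a b, r a b → f a < f b) (a : α) : ¬ Relation.TransGen r a a := by
  intro hcycle
  have hlt : Relation.TransGen (· < ·) (f a) (f a) := hcycle.lift f hf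
  rw [Relation.transGen_eq_self] at hlt
  exact lt_irrefl _ hlt

theorem wellFounded_of_forall_not_transGen_self {α : Type*} [Finite α] {r : α → α → Prop}
    (hr : ∀ a, ¬ Relation.TransGen r a a) : WellFounded r :=
  have : Std.Irrefl (Relation.TransGen r) := ⟨hr⟩
  Subrelation.wf Relation.TransGen.single
    (Finite.wellFounded_of_trans_of_irrefl (Relation.TransGen r))

theorem exists_equiv_fin_rel_imp_lt {α : Type*} [Finite α] {n : ℕ} (hn : Nat.card α = n)
    {r : α → α → Prop} (hr : WellFounded r) :
    ∃ e : Fin n ≃ α, ∀ i j, r (e i) (e j) → i < j := by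
  have : IsWellFounded α r := ⟨hr⟩
  let e := (Finite.equivFinOfCardEq hn).symm
  let rank : Fin n → Ordinal := IsWellFounded.rank r ∘ e
  exact ⟨(Tuple.sort rank).trans e, fun i j hij =>
    (Tuple.monotone_sort rank).reflect_lt (IsWellFounded.rank_lt_of_rel hij)⟩

theorem exists_equiv_fin_rel_imp_lt_iff {α : Type*} [Finite α] {n : ℕ} (hn : Nat.card α = n)
    {r : α → α → Prop} :
    (∃ e : Fin n ≃ α, ∀ i j, r (e i) (e j) → i < j) ↔ ∀ a, ¬ Relation.TransGen r a a := by
  constructor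
  · rintro ⟨e, he⟩
    exact not_transGen_self_of_map_lt (f := e.symm) fun a b hab => he _ _ (by simpa using hab)
  · intro hr
    exact exists_equiv_fin_rel_imp_lt hn (wellFounded_of_forall_not_transGen_self hr)

theorem stmt3_general {n : ℕ} (s t : Fin n → Pt) (v : Pt) :
    (∃ σ : Equiv.Perm (Fin n), ValidItinerary (s ∘ σ) (t ∘ σ) v) ↔
      ∀ i : Fin n, ¬ Relation.TransGen (Blocks s t v) i i := by
  simp only [validItinerary_iff_blocks_imp_lt, blocks_comp_iff (Equiv.injective _)]
  exact exists_equiv_fin_rel_imp_lt_iff (Nat.card_fin n)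

/-- Given start points with pairwise distances ≥ 2 and translated target points
with pairwise distances ≥ 2, some ordering of the matched pairs is a valid
itinerary for translation `v` if and only if the blocking relation has no
directed cycle (its transitive closure is irreflexive). -/
theorem stmt3 {n : ℕ} (s t : Fin n → Pt) (v : Pt)
    (hs : ∀ i j : Fin n, i ≠ j → 2 ≤ dist (s i) (s j))
    (ht : ∀ i j : Fin n, i ≠ j → 2 ≤ dist (t i + v) (t j + v)) :
    (∃ σ : Equiv.Perm (Fin n), ValidItinerary (s ∘ σ) (t ∘ σ) v) ↔
      ∀ i : Fin n, ¬ Relation.TransGen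
        (fun i j : Fin n => i ≠ j ∧
          ((∃ x ∈ segment ℝ (s j) (t j + v), dist x (s i) < 2) ∨
           (∃ x ∈ segment ℝ (s i) (t i + v), dist x (t j + v) < 2))) i i :=
  stmt3_general s t v
end

section
/- Let a, b, c ∈ ℝ² with dist(a,b) > 2. Then the vippodrome {v ∈ ℝ² : closedBall(a,1) ∩ convexHull(closedBall(b,1) ∪ closedBall(c + v,1)) ≠ ∅} equals the set {b + t • (x − b) − c : t ∈ ℝ, t ≥ 1, x ∈ closedBall(a,2)}; that is, it is the translate by −c of the shadow cone of the closed disc of radius 2 centered at a as seen from the point b. -/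
open Metric

/-!
The hippodrome of `b` and `d` with radius `s` is the Minkowski sum of the segment `[b, d]` and
the ball of radius `s` around the origin. Hence the ball of radius `r` around `a` meets it exactly
when the fattened ball of radius `r + s` around `a` meets the segment `[b, d]`. As `b` lies outside
the fattened ball, the segment passes through a point `x` of it exactly when `d` lies on the ray
from `b` through `x`, at `x` or beyond.
-/

section ShadowCone

variable (k : Type*) {V P : Type*} [Field k] [LinearOrder k] [AddCommGroup V] [Module k V]
  [AddTorsor V P]

/-- The shadow cone of `S` as seen from `b`: the points at or behind a point of `S` for an
observer at `b`. The parameter starts at `1`, so `S` itself belongs to its shadow cone. -/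
def shadowCone (b : P) (S : Set P) : Set P :=
  ⋃ x ∈ S, AffineMap.lineMap b x '' Set.Ici (1 : k)

variable {k}

theorem mem_shadowCone_iff_exists_wbtw [IsStrictOrderedRing k] {b y : P} {S : Set P}
    (hb : b ∉ S) :
    y ∈ shadowCone k b S ↔ ∃ x ∈ S, Wbtw k b x y := by
  simp only [shadowCone, Set.mem_iUnion₂, exists_prop]
  refine exists_congr fun x => and_congr_right fun hx => ?_
  have hbx : b ≠ x := (ne_of_mem_of_not_mem hx hb).symm
  rw [wbtw_iff_left_eq_or_right_mem_image_Ici, or_iff_right hbx]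

theorem mem_shadowCone_iff_exists_smul {b y : V} {S : Set V} :
    y ∈ shadowCone k b S ↔ ∃ t : k, 1 ≤ t ∧ ∃ x ∈ S, y = b + t • (x - b) := by
  simp only [shadowCone, Set.mem_iUnion₂, Set.mem_image, Set.mem_Ici, AffineMap.lineMap_apply,
    vsub_eq_sub, vadd_eq_add, add_comm _ b]
  grind

end ShadowCone

section Hippodrome

open scoped Pointwise

theorem convexHull_singleton_add_union_singleton_add {k V : Type*} [Field k] [LinearOrder k]
    [IsStrictOrderedRing k] [AddCommGroup V] [Module k V] {K : Set V} (hK : Convex k K) (p q : V) :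
    convexHull k (({p} + K) ∪ ({q} + K)) = segment k p q + K := by
  rw [← Set.union_add, Set.singleton_union, convexHull_add, convexHull_pair, hK.convexHull_eq]

variable {E : Type*} [SeminormedAddCommGroup E] [NormedSpace ℝ E] {a b d : E} {r s : ℝ}

/-- The hippodrome of radius `r` with end centers `p` and `q`: the region swept by a closed ball
of radius `r` whose center moves along the segment from `p` to `q`, encoded as the convex hull of
its two extreme positions. -/
def hippodrome (r : ℝ) (p q : E) : Set E :=
  convexHull ℝ (closedBall p r ∪ closedBall q r)

theorem hippodrome_eq_iUnion_closedBall (r : ℝ) (p q : E) :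
    hippodrome r p q = ⋃ y ∈ segment ℝ p q, closedBall y r := by
  calc hippodrome r p q
      = convexHull ℝ (({p} + closedBall 0 r) ∪ ({q} + closedBall 0 r)) := by
        simp only [hippodrome, singleton_add_closedBall_zero]
    _ = segment ℝ p q + closedBall 0 r :=
        convexHull_singleton_add_union_singleton_add (convex_closedBall 0 r) p q
    _ = ⋃ y ∈ segment ℝ p q, closedBall y r := by
        simp only [← Set.iUnion_add_left_image, Set.image_add_left, preimage_add_closedBall,
          zero_sub, neg_neg]

theorem closedBall_inter_closedBall_nonempty_iff (hr : 0 ≤ r) (hs : 0 ≤ s) :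
    (closedBall a r ∩ closedBall b s).Nonempty ↔ b ∈ closedBall a (r + s) := by
  rw [← Set.not_disjoint_iff_nonempty_inter, disjoint_closedBall_closedBall_iff hr hs, not_lt,
    mem_closedBall']

theorem closedBall_inter_hippodrome_nonempty_iff (hr : 0 ≤ r) (hs : 0 ≤ s)
    (h : r + s < dist a b) :
    (closedBall a r ∩ hippodrome s b d).Nonempty ↔
      d ∈ shadowCone ℝ b (closedBall a (r + s)) := by
  have hb : b ∉ closedBall a (r + s) := by rwa [mem_closedBall', not_le]
  calc (closedBall a r ∩ hippodrome s b d).Nonempty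
      ↔ ∃ y ∈ segment ℝ b d, (closedBall a r ∩ closedBall y s).Nonempty := by
        simp only [hippodrome_eq_iUnion_closedBall, Set.inter_iUnion₂, Set.nonempty_iUnion,
          exists_prop]
    _ ↔ ∃ y ∈ closedBall a (r + s), Wbtw ℝ b y d := by
        simp only [closedBall_inter_closedBall_nonempty_iff hr hs, mem_segment_iff_wbtw, and_comm]
    _ ↔ d ∈ shadowCone ℝ b (closedBall a (r + s)) := (mem_shadowCone_iff_exists_wbtw hb).symm

theorem stmt5_general (c : E) (hr : 0 ≤ r) (hs : 0 ≤ s) (h : r + s < dist a b) :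
    {v : E | (closedBall a r ∩
        convexHull ℝ (closedBall b s ∪ closedBall (c + v) s)).Nonempty} =
      {w : E | ∃ t : ℝ, 1 ≤ t ∧ ∃ x ∈ closedBall a (r + s), w = b + t • (x - b) - c} := by
  ext v
  calc (closedBall a r ∩ hippodrome s b (c + v)).Nonempty
      ↔ c + v ∈ shadowCone ℝ b (closedBall a (r + s)) :=
        closedBall_inter_hippodrome_nonempty_iff hr hs h
    _ ↔ ∃ t : ℝ, 1 ≤ t ∧ ∃ x ∈ closedBall a (r + s), v = b + t • (x - b) - c := by
        simp only [mem_shadowCone_iff_exists_smul, eq_sub_iff_add_eq']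

end Hippodrome

/-- The vippodrome of the first type — the set of translations `v` for which the
unit disc at `a` meets the hippodrome of `b` and `c + v` — is the translate by
`-c` of the shadow cone of the disc of radius 2 around `a` as seen from `b`. -/
theorem stmt5 (a b c : Pt) (h : 2 < dist a b) :
    {v : Pt | (closedBall a 1 ∩
        convexHull ℝ (closedBall b 1 ∪ closedBall (c + v) 1)).Nonempty} =
      {w : Pt | ∃ t : ℝ, 1 ≤ t ∧ ∃ x ∈ closedBall a 2, w = b + t • (x - b) - c} := by
  simpa only [one_add_one_eq_two] using
    stmt5_general c zero_le_one zero_le_one (one_add_one_eq_two.trans_lt h)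
end

section
/- Let u₁, u₂ be linearly independent vectors in ℝ² and w₁, w₂ be linearly independent vectors in ℝ², and let p, q ∈ ℝ². Set W₁ = p + {α•u₁ + β•u₂ : α, β ≥ 0} and W₂ = q + {α•w₁ + β•w₂ : α, β ≥ 0} (closed convex wedges with apexes p and q and opening angles less than π). Then the set frontier(W₁ + closedBall(0,2)) ∩ frontier(W₂ + closedBall(0,2)) is either infinite or contains at most four points, where + denotes Minkowski sum and frontier denotes the topological boundary in ℝ². -/
open Metric Pointwise

/-!
Let `K` and `K'` be the two expanded wedges, with apexes `p` and `q`, and suppose that their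
boundaries meet in finitely many points. A direction `b` interior to the first wedge orders the
boundary of `K` transversally to `b`, and in this order the common points form a strictly convex
arc, since three collinear ones would span a common segment. The second wedge gives a second such
order, and two convex-arc orders of the same five points must agree on four of
them, `x, y, z, w`.

Supporting lines of `K` at `y` and `z` have inner normals between those of the neighbouring edges,
so these normals are also normals of the second wedge. As `⟪y - p, n⟫ = -r‖n‖ ≤ ⟪y - q, n⟫` for
such a normal `n`, they pair nonnegatively with `p - q`, and by symmetry those of `K'` pair
nonpositively. These signs force `p - q` to be parallel to `z - y`. If `p ≠ q`, then the segment
from `y` to `z` lies in both boundaries. If `p = q`, then the normals common to both wedges sweep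
out a common circular arc. Either way the intersection is infinite after all.
-/

open Module Set
open scoped RealInnerProductSpace Topology

theorem exists_strictMono_comp_of_le_ncard {α β : Type*} [LinearOrder β] {S : Set α} {f : α → β}
    {k : ℕ} (hf : InjOn f S) (hS : S.Finite) (hk : k ≤ S.ncard) :
    ∃ a : Fin k → α, (∀ i, a i ∈ S) ∧ StrictMono (f ∘ a) := by
  lift S to Finset α using hS
  have hcard : k ≤ (S.image f).card := by
    rwa [Finset.card_image_of_injOn hf, ← ncard_coe_finset]
  choose a haS ha using fun i => Finset.mem_image.1 (Finset.orderEmbOfCardLe_mem _ hcard i)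
  refine ⟨a, haS, ?_⟩
  rw [show f ∘ a = Finset.orderEmbOfCardLe _ hcard from funext ha]
  exact OrderEmbedding.strictMono _

theorem infinite_of_segment_subset {E : Type*} [AddCommGroup E] [Module ℝ E]
    [TopologicalSpace E] [ContinuousAdd E] [ContinuousSMul ℝ E] [T1Space E] {K : Set E} {x y : E}
    (hxy : x ≠ y) (h : segment ℝ x y ⊆ K) : K.Infinite :=
  ((convex_segment x y).isPreconnected.infinite_of_nontrivial
    ⟨x, left_mem_segment ℝ x y, y, right_mem_segment ℝ x y, hxy⟩).mono h

section RecessionCone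

variable {E : Type*} {K : Set E} {x b : E}

/-- The vectors by which `K` can be translated into itself; for convex `K` this is the usual
recession cone, as positive multiples of such a vector are then again of this kind. -/
def recessionCone [Add E] (K : Set E) : Set E := {c | ∀ x ∈ K, c + x ∈ K}

theorem add_mem_interior_of_mem_interior_recessionCone [AddGroup E] [TopologicalSpace E]
    [ContinuousAdd E] (hb : b ∈ interior (recessionCone K)) (hx : x ∈ K) : b + x ∈ interior K := by
  have hsub : recessionCone K ⊆ (Homeomorph.addRight x) ⁻¹' K := fun c hc => hc x hx
  exact ((Homeomorph.addRight x).preimage_interior K).ge (interior_mono hsub hb)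

end RecessionCone

section InnerNormal

variable {E : Type*} [NormedAddCommGroup E] [InnerProductSpace ℝ E] {K : Set E} {x y n m b : E}

/-- `n` is a nonzero inner normal of `K` at `x`: the linear functional `⟪·, n⟫` is at least
`⟪x, n⟫` on `K`. The point `x` is not required to lie in `K`. -/
structure IsInnerNormal (K : Set E) (x n : E) : Prop where
  ne_zero : n ≠ 0
  inner_sub_nonneg : ∀ y ∈ K, 0 ≤ ⟪y - x, n⟫

theorem IsInnerNormal.mono {L : Set E} (h : IsInnerNormal L x n) (hKL : K ⊆ L) :
    IsInnerNormal K x n :=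
  ⟨h.ne_zero, fun y hy => h.inner_sub_nonneg y (hKL hy)⟩

theorem IsInnerNormal.on_closure (h : IsInnerNormal K x n) : IsInnerNormal (closure K) x n := by
  refine ⟨h.ne_zero, fun y hy => ?_⟩
  have hclosed : IsClosed {y : E | 0 ≤ ⟪y - x, n⟫} := isClosed_le (by fun_prop) (by fun_prop)
  exact closure_minimal h.inner_sub_nonneg hclosed hy

theorem IsInnerNormal.inner_sub_nonpos (h : IsInnerNormal K x n) (hy : y ∈ closure K) :
    ⟪x - y, n⟫ ≤ 0 := by
  rw [← neg_sub, inner_neg_left]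
  exact neg_nonpos.2 (h.on_closure.inner_sub_nonneg y hy)

theorem IsInnerNormal.inner_nonneg (h : IsInnerNormal K 0 n) (hx : x ∈ K) : 0 ≤ ⟪x, n⟫ := by
  simpa using h.inner_sub_nonneg x hx

theorem IsInnerNormal.inner_sub_pos (h : IsInnerNormal K x n) (hb : b ∈ interior K) :
    0 < ⟪b - x, n⟫ := by
  have hcont : Filter.Tendsto (fun t : ℝ => b - t • n) (𝓝 0) (𝓝 b) := by
    have : Continuous fun t : ℝ => b - t • n := by fun_prop
    simpa using this.tendsto 0
  have hev : ∀ᶠ t in 𝓝[>] (0 : ℝ), b - t • n ∈ K :=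
    (hcont.mono_left nhdsWithin_le_nhds).eventually (mem_interior_iff_mem_nhds.1 hb)
  obtain ⟨t, htK, ht⟩ := (hev.and self_mem_nhdsWithin).exists
  have hstep : ⟪b - t • n - x, n⟫ = ⟪b - x, n⟫ - t * ⟪n, n⟫ := by
    simp only [inner_sub_left, real_inner_smul_left]
    ring
  have hpos : 0 < t * ⟪n, n⟫ := mul_pos ht (real_inner_self_pos.2 h.ne_zero)
  linarith [h.inner_sub_nonneg _ htK]

theorem IsInnerNormal.inner_pos (h : IsInnerNormal K 0 n) (hb : b ∈ interior K) : 0 < ⟪b, n⟫ := by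
  simpa using h.inner_sub_pos hb

theorem IsInnerNormal.mem_frontier (h : IsInnerNormal K x n) (hx : x ∈ closure K) :
    x ∈ frontier K :=
  ⟨hx, fun hi => by simpa using h.inner_sub_pos hi⟩

theorem exists_isInnerNormal [CompleteSpace E] (hK : Convex ℝ K) (hKi : (interior K).Nonempty)
    (hx : x ∈ frontier K) : ∃ n, IsInnerNormal K x n := by
  obtain ⟨f, hf0, hf⟩ := geometric_hahn_banach_of_nonempty_interior_point hK hx.2 hKi
  refine ⟨(InnerProductSpace.toDual ℝ E).symm (-f), by simpa using hf0, fun y hy => ?_⟩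
  rw [real_inner_comm, InnerProductSpace.toDual_symm_apply, neg_apply, map_sub, neg_sub]
  exact sub_nonneg.2 (hf y hy)

theorem IsInnerNormal.on_recessionCone (h : IsInnerNormal K x n) (hx : x ∈ closure K) :
    IsInnerNormal (recessionCone K) 0 n := by
  refine ⟨h.ne_zero, fun c hc => ?_⟩
  have hcx : c + x ∈ closure K := map_mem_closure (continuous_const_add c) hx hc
  simpa using h.on_closure.inner_sub_nonneg _ hcx

theorem exists_isInnerNormal_of_mem_interior_recessionCone [CompleteSpace E] (hK : Convex ℝ K)
    (hb : b ∈ interior (recessionCone K)) (hx : x ∈ frontier K) :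
    ∃ n, IsInnerNormal K x n ∧ 0 < ⟪b, n⟫ := by
  obtain ⟨y, hy⟩ := closure_nonempty_iff.1 ⟨x, hx.1⟩
  obtain ⟨n, hn⟩ :=
    exists_isInnerNormal hK ⟨b + y, add_mem_interior_of_mem_interior_recessionCone hb hy⟩ hx
  exact ⟨n, hn, (hn.on_recessionCone hx.1).inner_pos hb⟩

theorem IsInnerNormal.of_inner_eq_zero (h : IsInnerNormal K x n) (hy : ⟪y - x, n⟫ = 0) :
    IsInnerNormal K y n := by
  refine ⟨h.ne_zero, fun z hz => ?_⟩
  rw [← sub_sub_sub_cancel_right z y x, inner_sub_left, hy, sub_zero]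
  exact h.inner_sub_nonneg z hz

theorem IsInnerNormal.segment_subset_frontier (h : IsInnerNormal K x n) (hK : Convex ℝ K)
    (hx : x ∈ closure K) (hy : y ∈ closure K) (hxy : ⟪y - x, n⟫ ≤ 0) :
    segment ℝ x y ⊆ frontier K := by
  intro z hz
  refine IsInnerNormal.mem_frontier (n := n) ?_ (hK.closure.segment_subset hx hy hz)
  rw [segment_eq_image'] at hz
  obtain ⟨t, -, rfl⟩ := hz
  have hxy0 : ⟪y - x, n⟫ = 0 := le_antisymm hxy (h.on_closure.inner_sub_nonneg y hy)
  exact h.of_inner_eq_zero (by rw [add_sub_cancel_left, real_inner_smul_left, hxy0, mul_zero])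

theorem IsInnerNormal.of_mem_segment {k : E} (hn : IsInnerNormal K x n) (hm : IsInnerNormal K x m)
    (hk : k ∈ segment ℝ n m) (hk0 : k ≠ 0) : IsInnerNormal K x k :=
  ⟨hk0, fun y hy => (convex_halfSpace_ge (innerSL ℝ (y - x)).isLinear 0).segment_subset
    (hn.inner_sub_nonneg y hy) (hm.inner_sub_nonneg y hy) hk⟩

theorem IsInnerNormal.inner_sub_pos_of_mem_segment {k : E} (hn : IsInnerNormal K x n)
    (hm : IsInnerNormal K x m) (hb : b ∈ interior K) (hk : k ∈ segment ℝ n m) :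
    0 < ⟪b - x, k⟫ :=
  (convex_halfSpace_gt (innerSL ℝ (b - x)).isLinear 0).segment_subset
    (hn.inner_sub_pos hb) (hm.inner_sub_pos hb) hk

end InnerNormal

theorem mem_hull_pair {E : Type*} [AddCommGroup E] [Module ℝ E] {u v x : E} :
    x ∈ PointedCone.hull ℝ {u, v} ↔ ∃ α β : ℝ, 0 ≤ α ∧ 0 ≤ β ∧ x = α • u + β • v := by
  rw [Submodule.mem_span_pair]
  constructor
  · rintro ⟨α, β, rfl⟩
    exact ⟨α, β, α.2, β.2, rfl⟩
  · rintro ⟨α, β, hα, hβ, rfl⟩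
    exact ⟨⟨α, hα⟩, ⟨β, hβ⟩, rfl⟩

section ExpandedCone

variable {E : Type*} [NormedAddCommGroup E] [NormedSpace ℝ E] {C : PointedCone ℝ E} {p : E} {r : ℝ}

/-- The cone `C`, moved to have its apex at `p` and expanded by a closed ball of radius `r`. -/
def expandedCone (C : PointedCone ℝ E) (p : E) (r : ℝ) : Set E := (C : Set E) + closedBall p r

theorem convex_expandedCone : Convex ℝ (expandedCone C p r) :=
  C.convex.add (convex_closedBall p r)

theorem closedBall_subset_expandedCone : closedBall p r ⊆ expandedCone C p r :=
  subset_add_right _ C.zero_mem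

theorem subset_recessionCone_expandedCone : (C : Set E) ⊆ recessionCone (expandedCone C p r) := by
  rintro c hc _ ⟨d, hd, e, he, rfl⟩
  exact ⟨c + d, C.add_mem hc hd, e, he, add_assoc c d e⟩

theorem wedge_add_closedBall (p u v : E) (r : ℝ) :
    {x : E | ∃ α β : ℝ, 0 ≤ α ∧ 0 ≤ β ∧ x = p + α • u + β • v} + closedBall (0 : E) r =
      expandedCone (PointedCone.hull ℝ {u, v}) p r := by
  have hwedge : {x : E | ∃ α β : ℝ, 0 ≤ α ∧ 0 ≤ β ∧ x = p + α • u + β • v} =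
      (PointedCone.hull ℝ {u, v} : Set E) + {p} := by
    ext x
    simp only [mem_ofPred_eq, add_singleton, image_add_right, mem_preimage, SetLike.mem_coe,
      mem_hull_pair, ← sub_eq_add_neg, sub_eq_iff_eq_add', add_assoc]
  rw [hwedge, expandedCone, add_assoc, singleton_add_closedBall, add_zero]

theorem interior_hull_nonempty_of_span_eq_top [FiniteDimensional ℝ E] {s : Set E}
    (hs : Submodule.span ℝ s = ⊤) : (interior (PointedCone.hull ℝ s : Set E)).Nonempty := by
  have hspan : Submodule.span ℝ (PointedCone.hull ℝ s : Set E) = ⊤ :=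
    top_unique (hs.ge.trans (Submodule.span_mono PointedCone.subset_hull))
  rw [(PointedCone.hull ℝ s).convex.interior_nonempty_iff_affineSpan_eq_top,
    ← insert_eq_of_mem (PointedCone.hull ℝ s).zero_mem]
  exact SetLike.coe_injective (by rw [affineSpan_insert_zero, hspan]; rfl)

end ExpandedCone

section NormalsOfExpandedCone

variable {E : Type*} [NormedAddCommGroup E] [InnerProductSpace ℝ E]
  {C C' : PointedCone ℝ E} {p x n m b : E} {r : ℝ}

theorem IsInnerNormal.of_expandedCone (h : IsInnerNormal (expandedCone C p r) x n)
    (hx : x ∈ closure (expandedCone C p r)) : IsInnerNormal (C : Set E) 0 n :=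
  (h.on_recessionCone hx).mono subset_recessionCone_expandedCone

theorem IsInnerNormal.neg_mul_norm_le (h : IsInnerNormal (C : Set E) 0 n)
    (hx : x ∈ closure (expandedCone C p r)) : -(r * ‖n‖) ≤ ⟪x - p, n⟫ := by
  have hclosed : IsClosed {x : E | -(r * ‖n‖) ≤ ⟪x - p, n⟫} :=
    isClosed_le (by fun_prop) (by fun_prop)
  refine closure_minimal ?_ hclosed hx
  rintro _ ⟨c, hc, e, he, rfl⟩
  have hcn : 0 ≤ ⟪c, n⟫ := h.inner_nonneg hc
  have hen : -(r * ‖n‖) ≤ ⟪e - p, n⟫ := neg_le_of_abs_le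
    ((abs_real_inner_le_norm _ _).trans
      (mul_le_mul_of_nonneg_right (mem_closedBall_iff_norm.1 he) (norm_nonneg n)))
  simpa only [mem_ofPred_eq, add_sub_assoc, inner_add_left] using le_add_of_nonneg_of_le hcn hen

theorem inner_sub_div_norm_smul_sub (hn : n ≠ 0) :
    ⟪p - (r / ‖n‖) • n - p, n⟫ = -(r * ‖n‖) := by
  have : ‖n‖ ≠ 0 := norm_ne_zero_iff.2 hn
  rw [sub_sub_cancel_left, inner_neg_left, real_inner_smul_left, real_inner_self_eq_norm_sq]
  field_simp

theorem sub_div_norm_smul_mem_expandedCone (hr : 0 ≤ r) (hn : n ≠ 0) :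
    p - (r / ‖n‖) • n ∈ expandedCone C p r := by
  refine closedBall_subset_expandedCone ?_
  rw [mem_closedBall_iff_norm, sub_sub_cancel_left, norm_neg, norm_smul, norm_div, norm_norm,
    div_mul_cancel₀ _ (norm_ne_zero_iff.2 hn), Real.norm_of_nonneg hr]

theorem IsInnerNormal.inner_sub_eq (hr : 0 ≤ r) (h : IsInnerNormal (expandedCone C p r) x n)
    (hx : x ∈ closure (expandedCone C p r)) : ⟪x - p, n⟫ = -(r * ‖n‖) := by
  refine le_antisymm ?_ ((h.of_expandedCone hx).neg_mul_norm_le hx)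
  have hlow := h.inner_sub_nonneg _ (sub_div_norm_smul_mem_expandedCone hr h.ne_zero)
  rw [← sub_sub_sub_cancel_right _ x p, inner_sub_left,
    inner_sub_div_norm_smul_sub h.ne_zero] at hlow
  linarith

theorem IsInnerNormal.sub_div_norm_smul_mem_frontier (hr : 0 ≤ r)
    (h : IsInnerNormal (C : Set E) 0 n) :
    p - (r / ‖n‖) • n ∈ frontier (expandedCone C p r) := by
  have hmem : p - (r / ‖n‖) • n ∈ expandedCone C p r :=
    sub_div_norm_smul_mem_expandedCone hr h.ne_zero
  refine IsInnerNormal.mem_frontier (n := n) ⟨h.ne_zero, fun y hy => ?_⟩ (subset_closure hmem)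
  rw [← sub_sub_sub_cancel_right y _ p, inner_sub_left, inner_sub_div_norm_smul_sub h.ne_zero]
  linarith [h.neg_mul_norm_le (subset_closure hy)]

theorem infinite_frontier_inter_frontier_of_common_normals (hr : 0 < r)
    (hb : b ∈ interior (C : Set E)) (hn : IsInnerNormal (C : Set E) 0 n)
    (hn' : IsInnerNormal (C' : Set E) 0 n) (hm : IsInnerNormal (C : Set E) 0 m)
    (hm' : IsInnerNormal (C' : Set E) 0 m) (hnm : ¬ SameRay ℝ n m) :
    (frontier (expandedCone C p r) ∩ frontier (expandedCone C' p r)).Infinite := by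
  have hne : ∀ k ∈ segment ℝ n m, k ≠ 0 := fun k hk h0 => by
    simpa [h0] using hn.inner_sub_pos_of_mem_segment hm hb hk
  let arc : E → E := fun k => p - (r / ‖k‖) • k
  have hcont : ContinuousOn arc (segment ℝ n m) :=
    continuousOn_const.sub ((continuousOn_const.div continuousOn_id.norm
      fun k hk => norm_ne_zero_iff.2 (hne k hk)).smul continuousOn_id)
  have hends : arc n ≠ arc m := fun h => hnm ((sameRay_iff_inv_norm_smul_eq_of_ne
    hn.ne_zero hm.ne_zero).2 (smul_right_injective E hr.ne' (by
      simpa only [arc, sub_right_inj, div_eq_mul_inv, mul_smul] using h)))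
  have himage : (arc '' segment ℝ n m).Infinite :=
    ((convex_segment n m).isPreconnected.image arc hcont).infinite_of_nontrivial
      ⟨arc n, mem_image_of_mem arc (left_mem_segment ℝ n m), arc m,
        mem_image_of_mem arc (right_mem_segment ℝ n m), hends⟩
  refine himage.mono ?_
  rintro _ ⟨k, hk, rfl⟩
  exact ⟨(hn.of_mem_segment hm hk (hne k hk)).sub_div_norm_smul_mem_frontier hr.le,
    (hn'.of_mem_segment hm' hk (hne k hk)).sub_div_norm_smul_mem_frontier hr.le⟩

end NormalsOfExpandedCone

section Plane

attribute [local instance] FiniteDimensional.of_fact_finrank_eq_two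

variable {E : Type*} [NormedAddCommGroup E] [InnerProductSpace ℝ E] [Fact (finrank ℝ E = 2)]
  (o : Orientation ℝ E (Fin 2)) {K K' : Set E} {x y z w b b' : E}

local notation "ω" => o.areaForm
local notation "J" => o.rightAngleRotation

theorem completeSpace_of_fact_finrank_eq_two : CompleteSpace E :=
  FiniteDimensional.complete ℝ E

attribute [local instance] completeSpace_of_fact_finrank_eq_two

theorem areaForm_mul_inner_cyclic_sum (x y z n : E) :
    ω x y * ⟪z, n⟫ + ω y z * ⟪x, n⟫ + ω z x * ⟪y, n⟫ = 0 := by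
  rcases eq_or_ne x 0 with rfl | hx
  · simp
  refine (mul_eq_zero.1 ?_).resolve_left (pow_ne_zero 2 (norm_ne_zero_iff.2 hx))
  rw [o.areaForm_swap z x]
  linear_combination (-ω x y) * o.inner_mul_inner_add_areaForm_mul_areaForm x z n
    + ω x z * o.inner_mul_inner_add_areaForm_mul_areaForm x y n
    - ⟪x, n⟫ * o.inner_mul_areaForm_sub x y z

theorem areaForm_mul_areaForm_cyclic_sum (x y z w : E) :
    ω x y * ω z w + ω y z * ω x w + ω z x * ω y w = 0 := by
  have h := areaForm_mul_inner_cyclic_sum o x y z (J w)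
  simp only [o.inner_rightAngleRotation_right] at h
  linarith

theorem not_sameRay_of_areaForm_ne_zero (h : ω x y ≠ 0) : ¬ SameRay ℝ x y := fun hxy =>
  h ((o.nonneg_inner_and_areaForm_eq_zero_iff_sameRay x y).2 hxy).2

theorem areaForm_injOn_frontier (hK : Convex ℝ K) (hb : b ∈ interior (recessionCone K)) :
    InjOn (fun x => ω x b) (frontier K) := by
  intro x hx y hy hxy
  obtain ⟨n, hn, hbn⟩ := exists_isInnerNormal_of_mem_interior_recessionCone hK hb hx
  obtain ⟨m, hm, hbm⟩ := exists_isInnerNormal_of_mem_interior_recessionCone hK hb hy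
  have hparallel : ω b (y - x) = 0 := by
    rw [o.areaForm_swap, map_sub, LinearMap.sub_apply, neg_eq_zero, sub_eq_zero]
    exact hxy.symm
  have hproj : ∀ k, ⟪b, y - x⟫ * ⟪b, k⟫ = ‖b‖ ^ 2 * ⟪y - x, k⟫ := fun k => by
    simpa [hparallel] using o.inner_mul_inner_add_areaForm_mul_areaForm b (y - x) k
  have hnonneg : 0 ≤ ⟪b, y - x⟫ := nonneg_of_mul_nonneg_left
    (hproj n ▸ mul_nonneg (sq_nonneg _) (hn.on_closure.inner_sub_nonneg y hy.1)) hbn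
  have hnonpos : ⟪b, y - x⟫ ≤ 0 := nonpos_of_mul_nonpos_left
    (hproj m ▸ mul_nonpos_of_nonneg_of_nonpos (sq_nonneg _) (hm.inner_sub_nonpos hx.1)) hbm
  have hb0 : b ≠ 0 := fun h => by simp [h] at hbn
  have hkahler : o.kahler b (y - x) = 0 := by
    simp [o.kahler_apply_apply, hparallel, le_antisymm hnonpos hnonneg]
  exact (sub_eq_zero.1 ((o.eq_zero_or_eq_zero_of_kahler_eq_zero hkahler).resolve_left hb0)).symm

/-- Otherwise one of `±(y - x)` would be a positive combination of `b` and some `c` in the recession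
cone, so that `y - x` would have strictly the same sign on the inner normals at `x` and at `y`. -/
theorem isInnerNormal_recessionCone_rightAngleRotation_sub (hK : Convex ℝ K)
    (hb : b ∈ interior (recessionCone K)) (hx : x ∈ frontier K) (hy : y ∈ frontier K)
    (hxy : ω x b < ω y b) : IsInnerNormal (recessionCone K) 0 (J (y - x)) := by
  have hd : 0 < ω (y - x) b := by simpa using hxy
  refine ⟨?_, fun c hc => ?_⟩
  · rw [map_ne_zero_iff _ o.rightAngleRotation.injective]
    rintro h
    simp [h] at hd
  obtain ⟨n, hn, hbn⟩ := exists_isInnerNormal_of_mem_interior_recessionCone hK hb hx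
  obtain ⟨m, hm, hbm⟩ := exists_isInnerNormal_of_mem_interior_recessionCone hK hb hy
  rw [sub_zero, o.inner_rightAngleRotation_right, ← o.areaForm_swap]
  by_contra! hneg
  have hdn : 0 ≤ ⟪y - x, n⟫ := hn.on_closure.inner_sub_nonneg y hy.1
  have hdm : ⟪y - x, m⟫ ≤ 0 := hm.inner_sub_nonpos hx.1
  have hcn : 0 ≤ ⟪c, n⟫ := (hn.on_recessionCone hx.1).inner_nonneg hc
  have hcm : 0 ≤ ⟪c, m⟫ := (hm.on_recessionCone hy.1).inner_nonneg hc
  have hsumn := areaForm_mul_inner_cyclic_sum o (y - x) b c n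
  have hsumm := areaForm_mul_inner_cyclic_sum o (y - x) b c m
  rw [o.areaForm_swap c] at hsumn hsumm
  have hωn : ω b c * ⟪y - x, n⟫ < 0 := by
    nlinarith [mul_nonneg hd.le hcn, mul_neg_of_neg_of_pos hneg hbn]
  have hωm : ω b c * ⟪y - x, m⟫ < 0 := by
    nlinarith [mul_nonneg hd.le hcm, mul_neg_of_neg_of_pos hneg hbm]
  nlinarith [neg_of_mul_neg_left hωn hdn, pos_of_mul_neg_left hωm hdm]

theorem areaForm_sub_sub_mul_inner (x y z b n : E) :
    ω (y - x) (z - y) * ⟪b, n⟫ =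
      (ω z b - ω y b) * -⟪y - x, n⟫ + (ω y b - ω x b) * ⟪z - y, n⟫ := by
  have h := areaForm_mul_inner_cyclic_sum o (y - x) (z - y) b n
  rw [o.areaForm_swap b] at h
  simp only [map_sub, LinearMap.sub_apply] at h ⊢
  linarith

theorem areaForm_sub_sub_nonneg (hK : Convex ℝ K) (hb : b ∈ interior (recessionCone K))
    (hx : x ∈ frontier K) (hy : y ∈ frontier K) (hz : z ∈ frontier K)
    (hxy : ω x b < ω y b) (hyz : ω y b < ω z b) : 0 ≤ ω (y - x) (z - y) := by
  obtain ⟨n, hn, hbn⟩ := exists_isInnerNormal_of_mem_interior_recessionCone hK hb hy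
  refine nonneg_of_mul_nonneg_left ?_ hbn
  rw [areaForm_sub_sub_mul_inner]
  exact add_nonneg
    (mul_nonneg (sub_pos.2 hyz).le (neg_nonneg.2 (hn.inner_sub_nonpos hx.1)))
    (mul_nonneg (sub_pos.2 hxy).le (hn.on_closure.inner_sub_nonneg z hz.1))

theorem segment_subset_frontier_of_areaForm_eq_zero (hK : Convex ℝ K)
    (hb : b ∈ interior (recessionCone K)) (hx : x ∈ frontier K) (hy : y ∈ frontier K)
    (hz : z ∈ frontier K) (hxy : ω x b' < ω y b') (hyz : ω y b' < ω z b')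
    (hxyz : ω (y - x) (z - y) = 0) : segment ℝ y x ⊆ frontier K := by
  obtain ⟨n, hn, -⟩ := exists_isInnerNormal_of_mem_interior_recessionCone hK hb hy
  refine hn.segment_subset_frontier hK hy.1 hx.1 ?_
  have hsum := areaForm_sub_sub_mul_inner o x y z b' n
  rw [hxyz, zero_mul, ← inner_neg_left, neg_sub] at hsum
  have hz0 := mul_nonneg (sub_pos.2 hxy).le (hn.on_closure.inner_sub_nonneg z hz.1)
  exact nonpos_of_mul_nonpos_right (by linarith) (sub_pos.2 hyz)

/-- A planar set that, listed in the order of the linear functional `ω · b`, is the vertex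
sequence of a strictly left-turning polygonal line; the functional orders points by their position
transversally to the direction `b`. -/
structure IsConvexArc (b : E) (S : Set E) : Prop where
  injOn : InjOn (fun x => ω x b) S
  areaForm_pos : ∀ x ∈ S, ∀ y ∈ S, ∀ z ∈ S, ω x b < ω y b → ω y b < ω z b → 0 < ω (y - x) (z - y)

theorem isConvexArc_frontier_inter_frontier (hK : Convex ℝ K) (hK' : Convex ℝ K')
    (hb : b ∈ interior (recessionCone K)) (hb' : b' ∈ interior (recessionCone K'))
    (hfin : (frontier K ∩ frontier K').Finite) :
    IsConvexArc o b (frontier K ∩ frontier K') := by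
  refine ⟨(areaForm_injOn_frontier o hK hb).mono inter_subset_left,
    fun x hx y hy z hz hxy hyz => lt_of_le_of_ne
      (areaForm_sub_sub_nonneg o hK hb hx.1 hy.1 hz.1 hxy hyz) fun h0 => ?_⟩
  have hyx : y ≠ x := by
    rintro rfl
    exact hxy.false
  exact infinite_of_segment_subset hyx (subset_inter
    (segment_subset_frontier_of_areaForm_eq_zero o hK hb hx.1 hy.1 hz.1 hxy hyz h0.symm)
    (segment_subset_frontier_of_areaForm_eq_zero o hK' hb' hx.2 hy.2 hz.2 hxy hyz h0.symm)) hfin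

namespace IsConvexArc

variable {o} {S : Set E}

theorem areaForm_pos₄ (h : IsConvexArc o b S) (hx : x ∈ S) (hy : y ∈ S) (hz : z ∈ S) (hw : w ∈ S)
    (hxy : ω x b < ω y b) (hyz : ω y b < ω z b) (hzw : ω z b < ω w b) :
    0 < ω (y - x) (w - z) := by
  have hxyz := h.areaForm_pos x hx y hy z hz hxy hyz
  have hyzw := h.areaForm_pos y hy z hz w hw hyz hzw
  have hsum := areaForm_mul_areaForm_cyclic_sum o (y - x) (z - y) (w - z) b
  rw [o.areaForm_swap (w - z) (y - x)] at hsum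
  have hxy₀ : 0 < ω (y - x) b := by simpa using hxy
  have hyz₀ : 0 < ω (z - y) b := by simpa using hyz
  have hzw₀ : 0 < ω (w - z) b := by simpa using hzw
  refine pos_of_mul_pos_left (b := ω (z - y) b) ?_ hyz₀.le
  linarith [mul_pos hxyz hzw₀, mul_pos hyzw hxy₀]

/-- Both orders list the vertices of the triangle `x y z` counterclockwise. -/
theorem areaForm_lt_cyclic (h : IsConvexArc o b S) (h' : IsConvexArc o b' S)
    (hx : x ∈ S) (hy : y ∈ S) (hz : z ∈ S) (hxy : ω x b < ω y b) (hyz : ω y b < ω z b) :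
    (ω x b' < ω y b' ∧ ω y b' < ω z b') ∨ (ω y b' < ω z b' ∧ ω z b' < ω x b') ∨
      (ω z b' < ω x b' ∧ ω x b' < ω y b') := by
  have hturn := h.areaForm_pos x hx y hy z hz hxy hyz
  have hxy' : ω x b' ≠ ω y b' := h'.injOn.ne hx hy fun e => by simp [e] at hxy
  have hyz' : ω y b' ≠ ω z b' := h'.injOn.ne hy hz fun e => by simp [e] at hyz
  have hxz' : ω x b' ≠ ω z b' := h'.injOn.ne hx hz fun e => by simp [e] at hxy hyz; linarith
  have hxzy := h'.areaForm_pos x hx z hz y hy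
  have hzyx := h'.areaForm_pos z hz y hy x hx
  have hyxz := h'.areaForm_pos y hy x hx z hz
  have hskew₁ := o.areaForm_swap x y
  have hskew₂ := o.areaForm_swap y z
  have hskew₃ := o.areaForm_swap x z
  simp only [map_sub, LinearMap.sub_apply, o.areaForm_apply_self] at hturn hxzy hzyx hyxz
  grind

/-- Were `z` before `y` in the second order, both `x` and `w` would have to lie between them. -/
theorem middle_lt (h : IsConvexArc o b S) (h' : IsConvexArc o b' S)
    (hx : x ∈ S) (hy : y ∈ S) (hz : z ∈ S) (hw : w ∈ S)
    (hxy : ω x b < ω y b) (hyz : ω y b < ω z b) (hzw : ω z b < ω w b) : ω y b' < ω z b' := by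
  by_contra! hzy
  have hxyz := h.areaForm_lt_cyclic h' hx hy hz hxy hyz
  have hyzw := h.areaForm_lt_cyclic h' hy hz hw hyz hzw
  have hxzw := h.areaForm_lt_cyclic h' hx hz hw (hxy.trans hyz) hzw
  have hzxy : ω z b' < ω x b' ∧ ω x b' < ω y b' := by grind
  have hzwy : ω z b' < ω w b' ∧ ω w b' < ω y b' := by grind
  have hwx : ω w b' < ω x b' := by grind
  have hneg := h'.areaForm_pos₄ hz hw hx hy hzwy.1 hwx hzxy.2
  rw [o.areaForm_swap] at hneg
  linarith [h.areaForm_pos₄ hx hy hz hw hxy hyz hzw]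

theorem strictMono_castSucc_or_strictMono_succ (h : IsConvexArc o b S) (h' : IsConvexArc o b' S)
    {a : Fin 5 → E} (ha : ∀ i, a i ∈ S) (hmono : StrictMono fun i => ω (a i) b) :
    (StrictMono fun i : Fin 4 => ω (a i.castSucc) b') ∨
      StrictMono fun i : Fin 4 => ω (a i.succ) b' := by
  have hlt : ∀ {i j}, i < j → ω (a i) b < ω (a j) b := fun hij => hmono hij
  have h₁₂ : ω (a 1) b' < ω (a 2) b' := h.middle_lt h' (ha 0) (ha 1) (ha 2) (ha 3)
    (hlt (by decide)) (hlt (by decide)) (hlt (by decide))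
  have h₂₃ : ω (a 2) b' < ω (a 3) b' := h.middle_lt h' (ha 1) (ha 2) (ha 3) (ha 4)
    (hlt (by decide)) (hlt (by decide)) (hlt (by decide))
  have hcyc := fun i j k (hij : i < j) (hjk : j < k) =>
    h.areaForm_lt_cyclic h' (ha i) (ha j) (ha k) (hlt hij) (hlt hjk)
  have hends : ω (a 0) b' < ω (a 1) b' ∨ ω (a 3) b' < ω (a 4) b' := by
    by_contra! hcon
    have h₂₀ : ω (a 2) b' < ω (a 0) b' := by grind [hcyc 0 1 2 (by decide) (by decide)]
    have h₄₂ : ω (a 4) b' < ω (a 2) b' := by grind [hcyc 2 3 4 (by decide) (by decide)]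
    grind [hcyc 0 2 4 (by decide) (by decide)]
  simp only [Fin.strictMono_iff_lt_succ, Fin.forall_fin_succ, IsEmpty.forall_iff, and_true]
  exact hends.imp (fun h₀₁ => ⟨h₀₁, h₁₂, h₂₃⟩) fun h₃₄ => ⟨h₁₂, h₂₃, h₃₄⟩

theorem exists_strictMono_strictMono (h : IsConvexArc o b S) (h' : IsConvexArc o b' S)
    (hS : S.Finite) (hcard : 4 < S.ncard) : ∃ a : Fin 4 → E, (∀ i, a i ∈ S) ∧
      (StrictMono fun i => ω (a i) b) ∧ StrictMono fun i => ω (a i) b' := by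
  obtain ⟨a, haS, ha⟩ := exists_strictMono_comp_of_le_ncard h.injOn hS hcard
  rcases h.strictMono_castSucc_or_strictMono_succ h' haS ha with ha' | ha'
  · exact ⟨_, fun i => haS i.castSucc, ha.comp Fin.strictMono_castSucc, ha'⟩
  · exact ⟨_, fun i => haS i.succ, ha.comp Fin.strictMono_succ, ha'⟩

end IsConvexArc

theorem inner_nonneg_of_areaForm_pos {c d₁ d₂ n : E} (hd : 0 < ω d₁ d₂) (hc₁ : 0 ≤ ω d₁ c)
    (hc₂ : 0 ≤ ω d₂ c) (hn₁ : ⟪d₁, n⟫ ≤ 0) (hn₂ : 0 ≤ ⟪d₂, n⟫) : 0 ≤ ⟪c, n⟫ := by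
  refine nonneg_of_mul_nonneg_right (a := ω d₁ d₂) ?_ hd
  have hsum := areaForm_mul_inner_cyclic_sum o d₁ d₂ c n
  rw [o.areaForm_swap c] at hsum
  linarith [mul_nonneg hc₂ (neg_nonneg.2 hn₁), mul_nonneg hc₁ hn₂]

theorem areaForm_nonneg_of_inner_nonneg {d v n m : E} (hd : 0 < ω d b) (hbn : 0 < ⟪b, n⟫)
    (hbm : 0 < ⟪b, m⟫) (hdn : 0 ≤ ⟪d, n⟫) (hdm : ⟪d, m⟫ ≤ 0) (hvn : 0 ≤ ⟪v, n⟫)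
    (hvm : 0 ≤ ⟪v, m⟫) : 0 ≤ ω d v := by
  by_contra! hdv
  have hsum := areaForm_mul_inner_cyclic_sum o d b v
  simp only [o.areaForm_swap v d] at hsum
  have hn : ω b v * ⟪d, n⟫ < 0 := by
    linarith [hsum n, mul_nonneg hd.le hvn, mul_neg_of_neg_of_pos hdv hbn]
  have hm : ω b v * ⟪d, m⟫ < 0 := by
    linarith [hsum m, mul_nonneg hd.le hvm, mul_neg_of_neg_of_pos hdv hbm]
  exact (neg_of_mul_neg_left hn hdn).not_gt (pos_of_mul_neg_left hm hdm)

/-- The four sign conditions confine `v` to the line of the edge `z - y`, and a nonzero `v` along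
that edge makes one supporting line of `K` and one of `K'` contain the edge. -/
theorem segment_subset_or_eq_zero_of_inner {v n m n' m' : E} (hK : Convex ℝ K)
    (hK' : Convex ℝ K') (hy : y ∈ frontier K ∩ frontier K') (hz : z ∈ frontier K ∩ frontier K')
    (hyz : ω y b < ω z b) (hn : IsInnerNormal K y n) (hm : IsInnerNormal K z m)
    (hn' : IsInnerNormal K' y n') (hm' : IsInnerNormal K' z m') (hbn : 0 < ⟪b, n⟫)
    (hbm : 0 < ⟪b, m⟫) (hbn' : 0 < ⟪b, n'⟫) (hbm' : 0 < ⟪b, m'⟫) (hvn : 0 ≤ ⟪v, n⟫)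
    (hvm : 0 ≤ ⟪v, m⟫) (hvn' : 0 ≤ ⟪-v, n'⟫) (hvm' : 0 ≤ ⟪-v, m'⟫) :
    segment ℝ y z ⊆ frontier K ∩ frontier K' ∨ v = 0 := by
  have hdb : 0 < ω (z - y) b := by simpa using hyz
  have hdn := hn.on_closure.inner_sub_nonneg z hz.1.1
  have hdm := hm.inner_sub_nonpos hy.1.1
  have hdn' := hn'.on_closure.inner_sub_nonneg z hz.2.1
  have hdm' := hm'.inner_sub_nonpos hy.2.1
  have hdv : ω (z - y) v = 0 := by
    refine le_antisymm ?_ (areaForm_nonneg_of_inner_nonneg o hdb hbn hbm hdn hdm hvn hvm)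
    simpa using areaForm_nonneg_of_inner_nonneg o hdb hbn' hbm' hdn' hdm' hvn' hvm'
  have hprop : ∀ k, ω (z - y) b * ⟪v, k⟫ = ω v b * ⟪z - y, k⟫ := fun k => by
    have hsum := areaForm_mul_inner_cyclic_sum o (z - y) b v k
    rw [o.areaForm_swap v, hdv, o.areaForm_swap b v] at hsum
    linarith
  rw [inner_neg_left] at hvn' hvm'
  rcases lt_trichotomy (ω v b) 0 with hneg | hzero | hpos
  · refine Or.inl (subset_inter (hn.segment_subset_frontier hK hy.1.1 hz.1.1 ?_) ?_)
    · exact nonpos_of_mul_nonneg_right (hprop n ▸ mul_nonneg hdb.le hvn) hneg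
    · rw [segment_symm]
      refine hm'.segment_subset_frontier hK' hz.2.1 hy.2.1 ?_
      rw [← neg_sub, inner_neg_left]
      nlinarith [hprop m', mul_nonneg hdb.le hvm']
  · right
    refine (smul_eq_zero.1 (ext_inner_right ℝ fun k => ?_)).resolve_left hdb.ne'
    rw [real_inner_smul_left, hprop, hzero, zero_mul, inner_zero_left]
  · refine Or.inl (subset_inter ?_ (hn'.segment_subset_frontier hK' hy.2.1 hz.2.1 ?_))
    · rw [segment_symm]
      refine hm.segment_subset_frontier hK hz.1.1 hy.1.1 ?_
      rw [← neg_sub, inner_neg_left]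
      nlinarith [hprop m, mul_nonneg hdb.le hvm]
    · nlinarith [hprop n', mul_nonneg hdb.le hvn']

section ExpandedCones

variable {C C' : PointedCone ℝ E} {p q : E} {r : ℝ}

theorem exists_common_normal (hb : b ∈ interior (C : Set E)) (hr : 0 ≤ r)
    (hx : x ∈ frontier (expandedCone C p r)) (hy : y ∈ frontier (expandedCone C p r))
    (hz : z ∈ frontier (expandedCone C p r)) (hy' : y ∈ closure (expandedCone C' q r))
    (hxyz : 0 < ω (y - x) (z - y)) (hxy : IsInnerNormal (C' : Set E) 0 (J (y - x)))
    (hyz : IsInnerNormal (C' : Set E) 0 (J (z - y))) :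
    ∃ n, IsInnerNormal (expandedCone C p r) y n ∧ IsInnerNormal (C : Set E) 0 n ∧
      IsInnerNormal (C' : Set E) 0 n ∧ 0 ≤ ⟪p - q, n⟫ := by
  obtain ⟨n, hn, -⟩ := exists_isInnerNormal_of_mem_interior_recessionCone convex_expandedCone
    (interior_mono subset_recessionCone_expandedCone hb) hy
  have hnC' : IsInnerNormal (C' : Set E) 0 n := by
    refine ⟨hn.ne_zero, fun c hc => ?_⟩
    have hc₁ := hxy.inner_nonneg hc
    have hc₂ := hyz.inner_nonneg hc
    rw [o.inner_rightAngleRotation_right, ← o.areaForm_swap] at hc₁ hc₂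
    rw [sub_zero]
    exact inner_nonneg_of_areaForm_pos o hxyz hc₁ hc₂ (hn.inner_sub_nonpos hx.1)
      (hn.on_closure.inner_sub_nonneg z hz.1)
  refine ⟨n, hn, hn.of_expandedCone hy.1, hnC', ?_⟩
  rw [← sub_sub_sub_cancel_left, inner_sub_left, hn.inner_sub_eq hr hy.1]
  linarith [hnC'.neg_mul_norm_le hy']

theorem isInnerNormal_rightAngleRotation_sub (hb : b ∈ interior (C : Set E))
    (hx : x ∈ frontier (expandedCone C p r)) (hy : y ∈ frontier (expandedCone C p r))
    (hxy : ω x b < ω y b) : IsInnerNormal (C : Set E) 0 (J (y - x)) :=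
  (isInnerNormal_recessionCone_rightAngleRotation_sub o convex_expandedCone
    (interior_mono subset_recessionCone_expandedCone hb) hx hy hxy).mono
    subset_recessionCone_expandedCone

theorem infinite_frontier_inter_frontier_of_strictMono {a : Fin 4 → E} (hr : 0 < r)
    (hb : b ∈ interior (C : Set E)) (hb' : b' ∈ interior (C' : Set E))
    (ha : ∀ i, a i ∈ frontier (expandedCone C p r) ∩ frontier (expandedCone C' q r))
    (hmono : StrictMono fun i => ω (a i) b) (hmono' : StrictMono fun i => ω (a i) b') :
    (frontier (expandedCone C p r) ∩ frontier (expandedCone C' q r)).Infinite := by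
  intro hfin
  have harc : IsConvexArc o b (frontier (expandedCone C p r) ∩ frontier (expandedCone C' q r)) :=
    isConvexArc_frontier_inter_frontier o convex_expandedCone convex_expandedCone
      (interior_mono subset_recessionCone_expandedCone hb)
      (interior_mono subset_recessionCone_expandedCone hb') hfin
  have hturn : ∀ i j k, i < j → j < k → 0 < ω (a j - a i) (a k - a j) := fun i j k hij hjk =>
    harc.areaForm_pos _ (ha i) _ (ha j) _ (ha k) (hmono hij) (hmono hjk)
  have hedge : ∀ i j, i < j → IsInnerNormal (C : Set E) 0 (J (a j - a i)) := fun i j hij =>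
    isInnerNormal_rightAngleRotation_sub o hb (ha i).1 (ha j).1 (hmono hij)
  have hedge' : ∀ i j, i < j → IsInnerNormal (C' : Set E) 0 (J (a j - a i)) := fun i j hij =>
    isInnerNormal_rightAngleRotation_sub o hb' (ha i).2 (ha j).2 (hmono' hij)
  have hnormal := fun i j k hij hjk => exists_common_normal o hb hr.le (ha i).1 (ha j).1 (ha k).1
    (ha j).2.1 (hturn i j k hij hjk) (hedge' i j hij) (hedge' j k hjk)
  have hnormal' := fun i j k hij hjk => exists_common_normal o hb' hr.le (ha i).2 (ha j).2 (ha k).2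
    (ha j).1.1 (hturn i j k hij hjk) (hedge i j hij) (hedge j k hjk)
  obtain ⟨n, hn, hnC, -, hvn⟩ := hnormal 0 1 2 (by decide) (by decide)
  obtain ⟨m, hm, hmC, -, hvm⟩ := hnormal 1 2 3 (by decide) (by decide)
  obtain ⟨n', hn', -, hnC', hvn'⟩ := hnormal' 0 1 2 (by decide) (by decide)
  obtain ⟨m', hm', -, hmC', hvm'⟩ := hnormal' 1 2 3 (by decide) (by decide)
  have hlt : ω (a 1) b < ω (a 2) b := hmono (by decide)
  rw [← neg_sub] at hvn' hvm'
  rcases segment_subset_or_eq_zero_of_inner o convex_expandedCone convex_expandedCone (ha 1) (ha 2)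
    hlt hn hm hn' hm' (hnC.inner_pos hb) (hmC.inner_pos hb) (hnC'.inner_pos hb) (hmC'.inner_pos hb)
    hvn hvm hvn' hvm' with hseg | hpq
  · exact infinite_of_segment_subset (fun h => hlt.ne (by rw [h])) hseg hfin
  · obtain rfl := sub_eq_zero.1 hpq
    refine infinite_frontier_inter_frontier_of_common_normals hr hb (hedge 0 1 (by decide))
      (hedge' 0 1 (by decide)) (hedge 1 2 (by decide)) (hedge' 1 2 (by decide))
      (not_sameRay_of_areaForm_ne_zero o ?_) hfin
    rw [o.areaForm_comp_rightAngleRotation]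
    exact (hturn 0 1 2 (by decide) (by decide)).ne'

theorem interior_hull_pair_nonempty {u v : E} (h : LinearIndependent ℝ ![u, v]) :
    (interior (PointedCone.hull ℝ {u, v} : Set E)).Nonempty := by
  refine interior_hull_nonempty_of_span_eq_top ?_
  rw [← Matrix.range_cons_cons_empty u v ![]]
  exact h.span_eq_top_of_card_eq_finrank'
    ((Fintype.card_fin 2).trans (Fact.out : finrank ℝ E = 2).symm)

theorem stmt6_general {E : Type*} [NormedAddCommGroup E] [InnerProductSpace ℝ E]
    [Fact (finrank ℝ E = 2)] {C C' : PointedCone ℝ E} (hC : (interior (C : Set E)).Nonempty)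
    (hC' : (interior (C' : Set E)).Nonempty) (p q : E) {r : ℝ} (hr : 0 < r) :
    (frontier (expandedCone C p r) ∩ frontier (expandedCone C' q r)).Infinite ∨
      (frontier (expandedCone C p r) ∩ frontier (expandedCone C' q r)).ncard ≤ 4 := by
  have hrank : finrank ℝ E = 2 := Fact.out
  let o := ((stdOrthonormalBasis ℝ E).reindex (finCongr hrank)).toBasis.orientation
  obtain ⟨b, hb⟩ := hC
  obtain ⟨b', hb'⟩ := hC'
  refine or_iff_not_imp_left.2 fun hinf => not_lt.1 fun hcard => hinf ?_
  have hfin := not_infinite.1 hinf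
  have hbK := interior_mono (subset_recessionCone_expandedCone (p := p) (r := r)) hb
  have hbK' := interior_mono (subset_recessionCone_expandedCone (p := q) (r := r)) hb'
  have harc := isConvexArc_frontier_inter_frontier o convex_expandedCone convex_expandedCone
    hbK hbK' hfin
  have harc' := isConvexArc_frontier_inter_frontier o convex_expandedCone convex_expandedCone
    hbK' hbK (inter_comm _ _ ▸ hfin)
  rw [inter_comm] at harc'
  obtain ⟨a, haS, ha, ha'⟩ := harc.exists_strictMono_strictMono harc' hfin hcard
  exact infinite_frontier_inter_frontier_of_strictMono o hr hb hb' haS ha ha'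

end ExpandedCones

end Plane

/-- The boundaries of two closed convex wedges expanded (Minkowski sum) by a
closed disc of radius 2 intersect either in infinitely many points or in at
most four points. -/
theorem stmt6 (u₁ u₂ w₁ w₂ : Pt) (hu : LinearIndependent ℝ ![u₁, u₂])
    (hw : LinearIndependent ℝ ![w₁, w₂]) (p q : Pt) (W₁ W₂ : Set Pt)
    (hW₁ : W₁ = {x : Pt | ∃ α β : ℝ, 0 ≤ α ∧ 0 ≤ β ∧ x = p + α • u₁ + β • u₂})
    (hW₂ : W₂ = {x : Pt | ∃ α β : ℝ, 0 ≤ α ∧ 0 ≤ β ∧ x = q + α • w₁ + β • w₂}) :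
    (frontier (W₁ + closedBall (0 : Pt) 2) ∩ frontier (W₂ + closedBall (0 : Pt) 2)).Infinite ∨
      (frontier (W₁ + closedBall (0 : Pt) 2) ∩ frontier (W₂ + closedBall (0 : Pt) 2)).ncard ≤ 4 := by
  have : Fact (finrank ℝ Pt = 2) := ⟨finrank_euclideanSpace_fin⟩
  subst hW₁ hW₂
  rw [wedge_add_closedBall, wedge_add_closedBall]
  exact stmt6_general (interior_hull_pair_nonempty hu) (interior_hull_pair_nonempty hw) p q two_pos
end

section
/- Let p₁, p₂, q be points of a real inner product space (e.g. ℝ²) such that dist(q, p₁) ≥ 2, dist(q, p₂) ≥ 2, and q lies in the closed diametral disc of p₁ and p₂, i.e., dist(q, midpoint(p₁,p₂)) ≤ dist(p₁,p₂)/2. Then dist(p₁, p₂) ≥ 2√2. -/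
/-! By Apollonius's theorem, `q` lies in the closed diametral disc of `p₁` and `p₂` exactly when
`dist q p₁ ^ 2 + dist q p₂ ^ 2 ≤ dist p₁ p₂ ^ 2`, that is, when the angle at `q` is not acute. Since
the arithmetic mean is at most the quadratic mean, the two distances from `q` then sum to at most
`√2 * dist p₁ p₂`, so they cannot both exceed `dist p₁ p₂ / √2`. -/

section DiametralDisc

variable {V P : Type*} [NormedAddCommGroup V] [InnerProductSpace ℝ V] [MetricSpace P]
  [NormedAddTorsor V P] {p₁ p₂ q : P}

theorem dist_midpoint_le_half_dist_iff :
    dist q (midpoint ℝ p₁ p₂) ≤ dist p₁ p₂ / 2 ↔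
      dist q p₁ ^ 2 + dist q p₂ ^ 2 ≤ dist p₁ p₂ ^ 2 := by
  have half_dist_nonneg : 0 ≤ dist p₁ p₂ / 2 := by positivity
  rw [EuclideanGeometry.dist_sq_add_dist_sq_eq_two_mul_dist_midpoint_sq_add_half_dist_sq,
    ← sq_le_sq₀ dist_nonneg half_dist_nonneg]
  constructor <;> intro h <;> linarith

theorem dist_add_dist_le_sqrt_two_mul_dist
    (hq : dist q (midpoint ℝ p₁ p₂) ≤ dist p₁ p₂ / 2) :
    dist q p₁ + dist q p₂ ≤ √2 * dist p₁ p₂ := by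
  refine (sq_le_sq₀ (by positivity) (by positivity)).mp ?_
  calc (dist q p₁ + dist q p₂) ^ 2
      ≤ 2 * (dist q p₁ ^ 2 + dist q p₂ ^ 2) := add_sq_le
    _ ≤ 2 * dist p₁ p₂ ^ 2 := by
      gcongr
      exact dist_midpoint_le_half_dist_iff.mp hq
    _ = (√2 * dist p₁ p₂) ^ 2 := by rw [mul_pow, Real.sq_sqrt zero_le_two]

theorem stmt10_general {r : ℝ} (h₁ : r ≤ dist q p₁) (h₂ : r ≤ dist q p₂)
    (hq : dist q (midpoint ℝ p₁ p₂) ≤ dist p₁ p₂ / 2) :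
    r * √2 ≤ dist p₁ p₂ := by
  refine le_of_mul_le_mul_left ?_ (Real.sqrt_pos.mpr zero_lt_two)
  calc √2 * (r * √2)
      = r + r := by rw [mul_left_comm, Real.mul_self_sqrt zero_le_two, mul_two]
    _ ≤ dist q p₁ + dist q p₂ := add_le_add h₁ h₂
    _ ≤ √2 * dist p₁ p₂ := dist_add_dist_le_sqrt_two_mul_dist hq

end DiametralDisc

/-- If `q` is at distance at least 2 from both `p₁` and `p₂` and lies in the
closed diametral disc of `p₁` and `p₂`, then `dist p₁ p₂ ≥ 2√2`. -/
theorem stmt10 {E : Type*} [NormedAddCommGroup E] [InnerProductSpace ℝ E]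
    (p₁ p₂ q : E) (h₁ : 2 ≤ dist q p₁) (h₂ : 2 ≤ dist q p₂)
    (hq : dist q (midpoint ℝ p₁ p₂) ≤ dist p₁ p₂ / 2) :
    2 * Real.sqrt 2 ≤ dist p₁ p₂ :=
  stmt10_general h₁ h₂ hq
end

section
/- Let C ⊆ ℝ² be a closed convex cone with 0 ∈ C, and let δ ∈ ℝ² with δ ≠ 0 and δ ∉ C. Then for all p, q ∈ ℝ² and all r ≥ 0, the set {t ∈ ℝ : t ≥ 0 ∧ p + t • δ ∈ (q + C) + closedBall(0, r)} is bounded above. In other words, a ray in a direction not belonging to the cone C eventually exits, and never re-enters, the expansion by radius r of any translate of C. -/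
open Metric Pointwise

open Filter Bornology Topology

/-!
An unbounded set of parameters on the ray would make its direction an asymptotic direction of the
expanded cone. Rescaling by `1 / t` with `t → ∞` makes a bounded summand disappear, so translating
and expanding the cone create no new asymptotic directions, and the asymptotic directions of a
cone are the points of its closure.
-/

section AsymptoticCone

variable {𝕜 E P : Type*} [NormedField 𝕜] [LinearOrder 𝕜] [IsStrictOrderedRing 𝕜] [OrderTopology 𝕜]
  [AddCommGroup E] [Module 𝕜 E] [TopologicalSpace E] [IsTopologicalAddGroup E]
  [ContinuousSMul 𝕜 E] [AddTorsor E P]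

theorem mem_asymptoticCone_iff_frequently_smul_mem {S : Set E} {v : E} :
    v ∈ asymptoticCone 𝕜 S ↔ ∃ᶠ z : 𝕜 × E in atTop ×ˢ 𝓝 v, z.1 • z.2 ∈ S := by
  rw [mem_asymptoticCone_iff, AffineSpace.asymptoticNhds_eq_smul, ← map₂_smul, ← map_prod_eq_map₂,
    frequently_map]

theorem asymptoticCone_add_subset_of_isVonNBounded {S B : Set E} (hB : IsVonNBounded 𝕜 B) :
    asymptoticCone 𝕜 (S + B) ⊆ asymptoticCone 𝕜 S := by
  intro v hv
  rw [mem_asymptoticCone_iff_frequently_smul_mem, frequently_iff_neBot] at hv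
  set l : Filter (𝕜 × E) := (atTop ×ˢ 𝓝 v) ⊓ 𝓟 {z | z.1 • z.2 ∈ S + B}
  have hfst : Tendsto Prod.fst l atTop := tendsto_fst.mono_left inf_le_left
  have hsnd : Tendsto Prod.snd l (𝓝 v) := tendsto_snd.mono_left inf_le_left
  have hdecomp : ∀ᶠ z in l, ∃ b ∈ B, z.1 • z.2 - b ∈ S := by
    filter_upwards [mem_inf_of_right (mem_principal_self _)] with z ⟨s, hs, b, hb, hsb⟩
    exact ⟨b, hb, by simpa only [← hsb, add_sub_cancel_right] using hs⟩
  obtain ⟨b, hb⟩ := hdecomp.choice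
  have hb_zero : Tendsto (fun z => z.1⁻¹ • b z) l (𝓝 0) :=
    hB.smul_tendsto_zero (hb.mono fun _ h => h.1) (tendsto_inv_atTop_zero.comp hfst)
  have hrescaled : Tendsto (fun z => z.2 - z.1⁻¹ • b z) l (𝓝 v) := by
    simpa only [sub_zero] using hsnd.sub hb_zero
  have hmem : ∀ᶠ z in l, z.1 • (z.2 - z.1⁻¹ • b z) ∈ S := by
    filter_upwards [hb, hfst.eventually_ne_atTop 0] with z hz hz_ne
    simpa only [smul_sub, smul_inv_smul₀ hz_ne] using hz.2
  exact (hfst.atTop_smul_nhds_tendsto_asymptoticNhds hrescaled).frequently hmem.frequently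

theorem bddAbove_setOf_smul_vadd_mem_of_notMem_asymptoticCone {S : Set P} {v : E}
    (hv : v ∉ asymptoticCone 𝕜 S) (p : P) : BddAbove {t : 𝕜 | t • v +ᵥ p ∈ S} := by
  rw [mem_asymptoticCone_iff, not_frequently] at hv
  have hray : Tendsto (fun t : 𝕜 => t • v +ᵥ p) atTop (AffineSpace.asymptoticNhds 𝕜 P v) :=
    (tendsto_id.atTop_smul_const_tendsto_asymptoticNhds v).asymptoticNhds_vadd_const p
  obtain ⟨T, hT⟩ := eventually_atTop.1 (hray.eventually hv)
  exact ⟨T, fun t ht => le_of_not_ge fun hTt => hT t hTt ht⟩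

theorem stmt11_general {C B : Set E} (hcone : ∀ c : 𝕜, 0 < c → ∀ x ∈ C, c • x ∈ C)
    (hB : IsVonNBounded 𝕜 B) {δ : E} (hδ : δ ∉ closure C) (p q : E) :
    BddAbove {t : 𝕜 | p + t • δ ∈ ({q} : Set E) + C + B} := by
  have hqB : IsVonNBounded 𝕜 ({q} + B) := (isVonNBounded_singleton q).add hB
  have hsum : ({q} : Set E) + C + B = C + ({q} + B) := by rw [add_assoc, add_left_comm]
  rw [← asymptoticCone_eq_closure_of_forall_smul_mem hcone] at hδ
  have hδ_sum : δ ∉ asymptoticCone 𝕜 (C + ({q} + B)) := fun h =>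
    hδ (asymptoticCone_add_subset_of_isVonNBounded hqB h)
  simpa only [hsum, vadd_eq_add, add_comm _ p] using
    bddAbove_setOf_smul_vadd_mem_of_notMem_asymptoticCone hδ_sum p

end AsymptoticCone

/-- A ray in a direction `δ` not belonging to a closed convex cone `C` (with
`0 ∈ C`) eventually exits, and never re-enters, the expansion by radius `r` of
any translate of `C`: the set of nonnegative ray parameters landing inside the
expanded translated cone is bounded above. -/
theorem stmt11 (C : Set Pt) (hconv : Convex ℝ C)
    (hcone : ∀ c : ℝ, 0 < c → ∀ x ∈ C, c • x ∈ C)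
    (hclosed : IsClosed C) (h0 : (0 : Pt) ∈ C)
    (δ : Pt) (hδ : δ ≠ 0) (hδC : δ ∉ C) :
    ∀ p q : Pt, ∀ r : ℝ, 0 ≤ r →
      BddAbove {t : ℝ | 0 ≤ t ∧ p + t • δ ∈ ({q} : Set Pt) + C + closedBall (0 : Pt) r} := by
  intro p q r _
  have hδ_closure : δ ∉ closure C := by rwa [hclosed.closure_eq]
  exact (stmt11_general hcone (NormedSpace.isVonNBounded_closedBall ℝ Pt r) hδ_closure p q).mono
    fun _ ht => ht.2
end

section
/- Let h ≥ 0, let 0 ≤ a ≤ b be reals, and let T ⊆ ℝ² be any set. Then the set V = {(v, ξ) ∈ ℝ² × ℝ : a ≤ ξ ≤ b ∧ ∀ t ∈ T, t + v ∈ closedBall((ξ,0), √(ξ² + h²))} is preconnected (hence connected whenever it is nonempty). -/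
open Metric

/-- The point of `ℝ²` with coordinates `x`, `y`. -/
noncomputable def pt (x y : ℝ) : Pt := (WithLp.equiv 2 (Fin 2 → ℝ)).symm ![x, y]

/-!
In the coordinate `u = v - (ξ, 0)`, which moves with the centre of the disc, the discs become
concentric, and their radius `√(ξ² + h²)` increases with `ξ ≥ 0`. The admissible `u` therefore form
a nested family of convex sets: of two admissible pairs, the one with the smaller parameter can be
moved up to the larger parameter with `u` fixed, and there the two are joined inside one convex set.
-/

open Set
open scoped Pointwise

section Erosion

variable {E : Type*}

/-- The erosion (Minkowski difference) `D ⊖ T`: the vectors that translate `T` into `D`. -/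
def erosion [Add E] (D T : Set E) : Set E := {v | ∀ t ∈ T, t + v ∈ D}

lemma erosion_subset_erosion [Add E] {D D' : Set E} (hD : D ⊆ D') (T : Set E) :
    erosion D T ⊆ erosion D' T :=
  fun _ hv t ht => hD (hv t ht)

lemma convex_erosion {𝕜 : Type*} [Semiring 𝕜] [PartialOrder 𝕜] [AddCommMonoid E] [Module 𝕜 E]
    {D : Set E} (hD : Convex 𝕜 D) (T : Set E) : Convex 𝕜 (erosion D T) := by
  have erosion_eq_iInter : erosion D T = ⋂ t ∈ T, (fun v => t + v) ⁻¹' D := by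
    ext v
    simp only [erosion, mem_ofPred_eq, mem_iInter, mem_preimage]
  rw [erosion_eq_iInter]
  exact convex_iInter₂ fun t _ => hD.translate_preimage_right t

lemma erosion_vadd [AddCommGroup E] (c : E) (D T : Set E) :
    erosion (c +ᵥ D) T = c +ᵥ erosion D T := by
  ext v
  simp only [erosion, mem_ofPred_eq, mem_vadd_set_iff_neg_vadd_mem, vadd_eq_add, add_left_comm]

end Erosion

section Families

variable {X ι : Type*} [TopologicalSpace X]

lemma isPreconnected_setOf_mem_of_monotoneOn [ConditionallyCompleteLinearOrder ι]
    [TopologicalSpace ι] [OrderTopology ι] [DenselyOrdered ι] {S : ι → Set X} {I : Set ι}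
    (hI : I.OrdConnected) (hmono : MonotoneOn S I) (hS : ∀ i ∈ I, IsPreconnected (S i)) :
    IsPreconnected {p : X × ι | p.2 ∈ I ∧ p.1 ∈ S p.2} := by
  refine isPreconnected_of_forall_pair ?_
  rintro ⟨x, i⟩ ⟨hi, hx⟩ ⟨y, j⟩ ⟨hj, hy⟩
  wlog hij : i ≤ j generalizing x i y j
  · obtain ⟨t, ht, hyt, hxt, htconn⟩ := this y j hj hy x i hi hx (le_of_not_ge hij)
    exact ⟨t, ht, hxt, hyt, htconn⟩
  have hxj : x ∈ S j := hmono hi hj hij hx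
  refine ⟨({x} ×ˢ Icc i j) ∪ (S j ×ˢ {j}), union_subset ?_ ?_, .inl ⟨rfl, left_mem_Icc.2 hij⟩,
    .inr ⟨hy, rfl⟩, ?_⟩
  · rintro ⟨_, k⟩ ⟨rfl, hk⟩
    have hkI : k ∈ I := hI.out hi hj hk
    exact ⟨hkI, hmono hi hkI hk.1 hx⟩
  · rintro ⟨z, _⟩ ⟨hz, rfl⟩
    exact ⟨hj, hz⟩
  · exact (isPreconnected_singleton.prod isPreconnected_Icc).union (x, j)
      ⟨rfl, right_mem_Icc.2 hij⟩ ⟨hxj, rfl⟩ ((hS j hj).prod isPreconnected_singleton)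

lemma isPreconnected_setOf_mem_vadd {G : Type*} [TopologicalSpace ι] [TopologicalSpace G]
    [VAdd G X] [ContinuousVAdd G X] {S : ι → Set X} {I : Set ι} {c : ι → G}
    (hc : ContinuousOn c I) (hS : IsPreconnected {p : X × ι | p.2 ∈ I ∧ p.1 ∈ S p.2}) :
    IsPreconnected {p : X × ι | p.2 ∈ I ∧ p.1 ∈ c p.2 +ᵥ S p.2} := by
  let shear : X × ι → X × ι := fun p => (c p.2 +ᵥ p.1, p.2)
  have shear_continuousOn : ContinuousOn shear {p | p.2 ∈ I ∧ p.1 ∈ S p.2} :=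
    ((hc.comp continuousOn_snd fun _ hp => hp.1).vadd continuousOn_fst).prodMk continuousOn_snd
  convert hS.image shear shear_continuousOn using 1
  ext ⟨x, i⟩
  constructor
  · rintro ⟨hi, u, hu, hux⟩
    exact ⟨(u, i), ⟨hi, hu⟩, Prod.ext hux rfl⟩
  · rintro ⟨⟨u, _⟩, ⟨hi, hu⟩, ⟨⟩⟩
    exact ⟨hi, u, hu, rfl⟩

end Families

theorem stmt14_general {E ι : Type*} [SeminormedAddCommGroup E] [NormedSpace ℝ E]
    [ConditionallyCompleteLinearOrder ι] [TopologicalSpace ι] [OrderTopology ι] [DenselyOrdered ι]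
    {I : Set ι} (hI : I.OrdConnected) {c : ι → E} (hc : ContinuousOn c I)
    {r : ι → ℝ} (hr : MonotoneOn r I) (T : Set E) :
    IsPreconnected {p : E × ι | p.2 ∈ I ∧ ∀ t ∈ T, t + p.1 ∈ closedBall (c p.2) (r p.2)} := by
  have erosion_closedBall (i : ι) :
      erosion (closedBall (c i) (r i)) T = c i +ᵥ erosion (closedBall 0 (r i)) T := by
    rw [← erosion_vadd, vadd_closedBall, vadd_eq_add, add_zero]
  have concentric :
      IsPreconnected {p : E × ι | p.2 ∈ I ∧ p.1 ∈ erosion (closedBall 0 (r p.2)) T} :=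
    isPreconnected_setOf_mem_of_monotoneOn hI
      (fun _ hi _ hj hij => erosion_subset_erosion (closedBall_subset_closedBall (hr hi hj hij)) T)
      fun i _ => (convex_erosion (convex_closedBall 0 (r i)) T).isPreconnected
  change IsPreconnected {p : E × ι | p.2 ∈ I ∧ p.1 ∈ erosion (closedBall (c p.2) (r p.2)) T}
  simp only [erosion_closedBall]
  exact isPreconnected_setOf_mem_vadd (S := fun i => erosion (closedBall 0 (r i)) T) hc concentric

lemma continuous_pt_left (y : ℝ) : Continuous fun x => pt x y := by
  simp only [pt, WithLp.equiv_symm_apply]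
  fun_prop

lemma monotoneOn_sqrt_sq_add (k : ℝ) : MonotoneOn (fun x : ℝ => √(x ^ 2 + k)) (Ici 0) :=
  fun _ hx _ _ hxy => Real.sqrt_le_sqrt (add_le_add_left (pow_le_pow_left₀ hx hxy 2) k)

/-- The set `V` of pairs `(v, ξ)` with `a ≤ ξ ≤ b` such that `T + v` is contained
in the closed disc centered at `(ξ,0)` of radius `√(ξ² + h²)` is preconnected. -/
theorem stmt14 (h : ℝ) (hh : 0 ≤ h) (a b : ℝ) (ha : 0 ≤ a) (hab : a ≤ b)
    (T : Set Pt) :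
    IsPreconnected {p : Pt × ℝ | a ≤ p.2 ∧ p.2 ≤ b ∧
      ∀ t ∈ T, t + p.1 ∈ closedBall (pt p.2 0) (Real.sqrt (p.2 ^ 2 + h ^ 2))} := by
  simpa only [mem_Icc, and_assoc] using stmt14_general ordConnected_Icc
    (continuous_pt_left 0).continuousOn
    ((monotoneOn_sqrt_sq_add (h ^ 2)).mono fun _ hx => ha.trans hx.1) T
end

section
/- Let s₁, s₂, t₁, t₂ ∈ ℝ². There exist real numbers a, b, c such that for every v ∈ ℝ, the determinant of the 4×4 matrix with rows (1, s₁.1, s₁.2, s₁.1² + s₁.2²), (1, s₂.1, s₂.2, s₂.1² + s₂.2²), (1, t₁.1 + v, t₁.2, (t₁.1 + v)² + t₁.2²), (1, t₂.1 + v, t₂.2, (t₂.1 + v)² + t₂.2²) equals a·v² + b·v + c. In other words, the cocircularity condition for the four points s₁, s₂, t₁ + (v,0), t₂ + (v,0) is a polynomial equation of degree at most 2 in v. -/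
/-!
Let `χ` be the 0/1 column marking the moving points. Translating them by `v • w` adds `v • χ wᵀ` to
the coordinate columns and turns the column `L` of squared norms into `L + v • L' + v² ⟨w, w⟩ • χ`.
A rank-one update contributes at most one factor `v` to a determinant, and none at all when `χ` is
itself one of the columns, because the update is then undone by column operations. Expanding in the
last column, the three terms have degree at most `1`, `1 + 1` and `2 + 0`.
-/

open Matrix

section RankOneUpdate

variable {m n R : Type*} [DecidableEq n] [CommRing R]

theorem updateCol_add_smul_vecMulVec (A : Matrix m n R) (j : n) (u x : m → R) (w : n → R)
    (v : R) :
    (A + v • vecMulVec u w).updateCol j x =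
      A.updateCol j x + v • vecMulVec u (Function.update w j 0) := by
  ext i k
  obtain rfl | hk := eq_or_ne k j <;> simp [vecMulVec_apply, *]

variable [Fintype n]

theorem det_fromBlocks_smul_replicateRow_one (A : Matrix n n R) (u w : n → R) (v : R) :
    (fromBlocks A (replicateCol Unit u) (replicateRow Unit (v • w)) 1).det =
      A.det + v * (fromBlocks A (replicateCol Unit u) (replicateRow Unit w) 0).det := by
  let B : Matrix (n ⊕ Unit) (n ⊕ Unit) R := fromBlocks A (replicateCol Unit u) 0 1
  let r : n ⊕ Unit → R := Sum.elim w 0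
  have updateRow_r : B.updateRow (Sum.inr ()) r =
      fromBlocks A (replicateCol Unit u) (replicateRow Unit w) 0 := by
    ext (i | i) (k | k) <;> simp [B, r]
  calc (fromBlocks A (replicateCol Unit u) (replicateRow Unit (v • w)) 1).det
      = (B.updateRow (Sum.inr ()) (B (Sum.inr ()) + v • r)).det := by
        congr 1
        ext (i | i) (k | k) <;> simp [B, r]
    _ = B.det + v * (fromBlocks A (replicateCol Unit u) (replicateRow Unit w) 0).det := by
        rw [det_updateRow_add, det_updateRow_smul, updateRow_eq_self, updateRow_r]
    _ = A.det + v * (fromBlocks A (replicateCol Unit u) (replicateRow Unit w) 0).det := by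
        rw [det_fromBlocks_zero₂₁, det_one, mul_one]

theorem det_add_smul_vecMulVec (A : Matrix n n R) (u w : n → R) (v : R) :
    (A + v • vecMulVec u w).det =
      A.det + v * (fromBlocks A (replicateCol Unit u) (replicateRow Unit (-w)) 0).det := by
  -- The Schur complement of the corner entry `1` is the rank-one update of `A`.
  rw [← det_fromBlocks_smul_replicateRow_one, det_fromBlocks_one₂₂, ← vecMulVec_eq Unit,
    vecMulVec_smul, vecMulVec_neg, smul_neg, sub_neg_eq_add]

theorem det_updateCol_add_smul_vecMulVec_self (A : Matrix n n R) (j : n) (u w : n → R) (v : R) :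
    ((A + v • vecMulVec u w).updateCol j u).det = (A.updateCol j u).det := by
  rw [updateCol_add_smul_vecMulVec, ← det_transpose, ← det_transpose (A.updateCol j u)]
  refine det_eq_of_forall_row_eq_smul_add_const (v • Function.update w j 0) j (by simp) fun i k ↦ ?_
  simp only [transpose_apply, Matrix.add_apply, Matrix.smul_apply, vecMulVec_apply,
    updateCol_self, Pi.smul_apply, smul_eq_mul]
  ring

theorem exists_det_updateCol_add_smul_vecMulVec_eq_quadratic
    (A : Matrix n n R) (j : n) (u w x y : n → R) (q : R) :
    ∃ a b c : R, ∀ v : R,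
      ((A + v • vecMulVec u w).updateCol j (x + v • y + (v ^ 2 * q) • u)).det =
        a * v ^ 2 + b * v + c := by
  have affine (z : n → R) : ∃ b c : R, ∀ v : R,
      ((A + v • vecMulVec u w).updateCol j z).det = b * v + c :=
    ⟨_, _, fun v ↦ by
      rw [updateCol_add_smul_vecMulVec, det_add_smul_vecMulVec, add_comm, mul_comm v]⟩
  obtain ⟨b₀, c₀, hx⟩ := affine x
  obtain ⟨b₁, c₁, hy⟩ := affine y
  refine ⟨b₁ + q * (A.updateCol j u).det, b₀ + c₁, c₀, fun v ↦ ?_⟩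
  rw [det_updateCol_add, det_updateCol_add, det_updateCol_smul, det_updateCol_smul, hx, hy,
    det_updateCol_add_smul_vecMulVec_self]
  ring

end RankOneUpdate

section Cospherical

variable {ι R : Type*} [CommRing R] {d : ℕ}

theorem dotProduct_self_add_smul {n : Type*} [Fintype n] (x w : n → R) (v : R) :
    (x + v • w) ⬝ᵥ (x + v • w) = x ⬝ᵥ x + v * (2 * (x ⬝ᵥ w)) + v ^ 2 * (w ⬝ᵥ w) := by
  simp only [add_dotProduct, dotProduct_add, smul_dotProduct, dotProduct_smul, smul_eq_mul,
    dotProduct_comm w x]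
  ring

/-- The matrix with rows `(1, pᵢ, ⟨pᵢ, pᵢ⟩)`. For `d + 2` points of `ℝ ^ d` it is square, and its
determinant vanishes exactly when the points lie on a common sphere or hyperplane. -/
def paraboloidMatrix (p : ι → Fin d → R) : Matrix ι (Fin (d + 2)) R :=
  of fun i ↦ Fin.snoc (Fin.cons 1 (p i) : Fin (d + 1) → R) (p i ⬝ᵥ p i)

theorem paraboloidMatrix_apply_fin_two (p : ι → Fin 2 → R) (i : ι) :
    paraboloidMatrix p i = ![1, p i 0, p i 1, p i 0 ^ 2 + p i 1 ^ 2] := by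
  have dotProduct_self : p i ⬝ᵥ p i = p i 0 ^ 2 + p i 1 ^ 2 := by
    rw [dotProduct, Fin.sum_univ_two, sq, sq]
  ext j
  fin_cases j
  exacts [rfl, rfl, rfl, dotProduct_self]

theorem paraboloidMatrix_fin_two (p : Fin 4 → Fin 2 → R) :
    paraboloidMatrix p =
      !![1, p 0 0, p 0 1, p 0 0 ^ 2 + p 0 1 ^ 2;
         1, p 1 0, p 1 1, p 1 0 ^ 2 + p 1 1 ^ 2;
         1, p 2 0, p 2 1, p 2 0 ^ 2 + p 2 1 ^ 2;
         1, p 3 0, p 3 1, p 3 0 ^ 2 + p 3 1 ^ 2] := by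
  refine funext fun i ↦ ?_
  fin_cases i <;> exact paraboloidMatrix_apply_fin_two p _

theorem paraboloidMatrix_add_indicator (p : ι → Fin d → R) (S : Set ι) (w : Fin d → R) (v : R) :
    paraboloidMatrix (fun i ↦ p i + S.indicator (fun _ ↦ v • w) i) =
      (paraboloidMatrix p +
        v • vecMulVec (S.indicator 1) (Fin.snoc (Fin.cons 0 w : Fin (d + 1) → R) 0)).updateCol
          (Fin.last (d + 1))
          ((fun i ↦ p i ⬝ᵥ p i) + v • S.indicator (fun i ↦ 2 * (p i ⬝ᵥ w)) +
            (v ^ 2 * (w ⬝ᵥ w)) • S.indicator 1) := by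
  ext i k
  induction k using Fin.lastCases with
  | last =>
    by_cases hi : i ∈ S <;>
      simp [paraboloidMatrix, hi, dotProduct_self_add_smul, -dotProduct_add, -add_dotProduct]
  | cast k =>
    by_cases hi : i ∈ S <;> cases k using Fin.cases <;>
      simp [paraboloidMatrix, hi, vecMulVec_apply, updateCol_ne, -Fin.castSucc_succ]

theorem stmt15_general (p : Fin (d + 2) → Fin d → R) (S : Set (Fin (d + 2))) (w : Fin d → R) :
    ∃ a b c : R, ∀ v : R,
      (paraboloidMatrix (fun i ↦ p i + S.indicator (fun _ ↦ v • w) i)).det =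
        a * v ^ 2 + b * v + c := by
  simp only [paraboloidMatrix_add_indicator]
  exact exists_det_updateCol_add_smul_vecMulVec_eq_quadratic ..

end Cospherical

/-- The cocircularity determinant of `s₁`, `s₂`, `t₁ + (v,0)`, `t₂ + (v,0)` is a
polynomial of degree at most 2 in `v`. -/
theorem stmt15 (s₁ s₂ t₁ t₂ : ℝ × ℝ) :
    ∃ a b c : ℝ, ∀ v : ℝ,
      Matrix.det !![1, s₁.1, s₁.2, s₁.1 ^ 2 + s₁.2 ^ 2;
                    1, s₂.1, s₂.2, s₂.1 ^ 2 + s₂.2 ^ 2;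
                    1, t₁.1 + v, t₁.2, (t₁.1 + v) ^ 2 + t₁.2 ^ 2;
                    1, t₂.1 + v, t₂.2, (t₂.1 + v) ^ 2 + t₂.2 ^ 2] =
        a * v ^ 2 + b * v + c := by
  simpa [paraboloidMatrix_fin_two] using stmt15_general
    ![![s₁.1, s₁.2], ![s₂.1, s₂.2], ![t₁.1, t₁.2], ![t₂.1, t₂.2]] {2, 3} ![1, 0]
end

section
/- Let V be a finite set and let r : V → V → Prop be an irreflexive relation (a finite digraph without self-loops). For v ∈ V let d⁺(v) denote the number of w ∈ V with r v w (the out-degree of v). Then there exists a subset V′ ⊆ V such that the restriction of r to V′ is acyclic (the transitive closure of the restricted relation is irreflexive) and |V′| ≥ ∑_{v ∈ V} 1/(d⁺(v) + 1). The same bound holds with out-degrees replaced by in-degrees d⁻(v) = |{w : r w v}|. -/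
/-!
Give each vertex `v` the weight `1 / (d⁺(v) + 1)`. Summing the weights of the closed
in-neighbourhoods of all remaining vertices counts each `u` at most `d⁺(u) + 1` times, so on
average a closed in-neighbourhood has weight at most `1`. Put the centre `v` of such a
neighbourhood into the acyclic set, delete the neighbourhood, and repeat: each chosen vertex costs
at most `1` of the total weight, and since no remaining vertex points to `v`, no cycle passes
through `v`. The in-degree bound is the out-degree bound for the reversed digraph.
-/

open Finset

section Acyclic

variable {V : Type*} {r : V → V → Prop} {s : Set V} {v : V}

/-- The digraph with edge relation `r` has no directed cycle all of whose vertices lie in `s`.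
A loop `r v v` at a vertex `v ∈ s` counts as a cycle. -/
def IsAcyclicOn (r : V → V → Prop) (s : Set V) : Prop :=
  ∀ v, ¬ Relation.TransGen (fun a b => a ∈ s ∧ b ∈ s ∧ r a b) v v

theorem isAcyclicOn_empty : IsAcyclicOn r ∅ := fun _ hcycle => by
  obtain ⟨_, ⟨hmem, -⟩, -⟩ := Relation.TransGen.head'_iff.1 hcycle
  exact hmem

theorem IsAcyclicOn.swap (hs : IsAcyclicOn r s) : IsAcyclicOn (Function.swap r) s :=
  fun v hcycle => hs v <| Relation.transGen_swap.1 <|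
    Relation.TransGen.mono (fun _ _ ⟨ha, hb, hab⟩ => ⟨hb, ha, hab⟩) _ _ hcycle

protected theorem IsAcyclicOn.insert (hs : IsAcyclicOn r s) (hv : ∀ x ∈ insert v s, ¬ r x v) :
    IsAcyclicOn r (insert v s) := by
  intro x hcycle
  have mem_of_edge {a b : V} (ha : a ∈ insert v s) (hb : b ∈ insert v s) (hab : r a b) : b ∈ s :=
    hb.resolve_left fun hbv => hv a ha (hbv ▸ hab)
  have hx : x ∈ s := by
    obtain ⟨_, -, ha, hb, hab⟩ := Relation.TransGen.tail'_iff.1 hcycle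
    exact mem_of_edge ha hb hab
  have path_in_s {y : V}
      (hpath : Relation.TransGen (fun a b => a ∈ insert v s ∧ b ∈ insert v s ∧ r a b) x y) :
      y ∈ s ∧ Relation.TransGen (fun a b => a ∈ s ∧ b ∈ s ∧ r a b) x y := by
    induction hpath with
    | single hedge =>
      have hy := mem_of_edge hedge.1 hedge.2.1 hedge.2.2
      exact ⟨hy, .single ⟨hx, hy, hedge.2.2⟩⟩
    | tail _ hedge ih =>
      have hy := mem_of_edge hedge.1 hedge.2.1 hedge.2.2
      exact ⟨hy, ih.2.tail ⟨ih.1, hy, hedge.2.2⟩⟩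
  exact hs x (path_in_s hcycle).2

end Acyclic

section Greedy

variable {V K : Type*}

theorem exists_sum_filter_le_of_card_mul_le [Semiring K] [LinearOrder K] [IsStrictOrderedRing K]
    {R : V → V → Prop} [DecidableRel R] {S : Finset V} (hS : S.Nonempty) {w : V → K} {c : K}
    (hw : ∀ u ∈ S, #{v ∈ S | R u v} * w u ≤ c) :
    ∃ v ∈ S, ∑ u ∈ S with R u v, w u ≤ c := by
  refine exists_le_of_sum_le hS ?_
  calc ∑ v ∈ S, ∑ u ∈ S with R u v, w u
      = ∑ u ∈ S, ∑ v ∈ S with R u v, w u := by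
        simp_rw [sum_filter]
        exact sum_comm
    _ = ∑ u ∈ S, #{v ∈ S | R u v} * w u := by simp_rw [sum_const, nsmul_eq_mul]
    _ ≤ ∑ _u ∈ S, c := sum_le_sum hw

theorem card_filter_eq_or_le [DecidableEq V] (S : Finset V) (u : V) (p : V → Prop)
    [DecidablePred p] : #{v ∈ S | u = v ∨ p v} ≤ #{v ∈ S | p v} + 1 := by
  refine (card_le_card fun v hv => ?_).trans (card_insert_le u _)
  grind

theorem exists_sum_filter_eq_or_le [Semiring K] [LinearOrder K] [IsStrictOrderedRing K]
    [DecidableEq V] {r : V → V → Prop} [DecidableRel r] {S : Finset V} (hS : S.Nonempty)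
    {w : V → K} {c : K} (hw₀ : ∀ u ∈ S, 0 ≤ w u)
    (hw : ∀ u ∈ S, (#{v ∈ S | r u v} + 1) * w u ≤ c) :
    ∃ v ∈ S, ∑ u ∈ S with u = v ∨ r u v, w u ≤ c := by
  refine exists_sum_filter_le_of_card_mul_le hS fun u hu => ?_
  refine le_trans (mul_le_mul_of_nonneg_right ?_ (hw₀ u hu)) (hw u hu)
  exact_mod_cast card_filter_eq_or_le S u (r u)

theorem exists_isAcyclicOn_sum_le_card [Semiring K] [LinearOrder K] [IsStrictOrderedRing K]
    {r : V → V → Prop} [DecidableRel r] {w : V → K} (S : Finset V)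
    (hirr : ∀ v ∈ S, ¬ r v v) (hw₀ : ∀ v ∈ S, 0 ≤ w v)
    (hw : ∀ v ∈ S, (#{x ∈ S | r v x} + 1) * w v ≤ 1) :
    ∃ T ⊆ S, IsAcyclicOn r T ∧ ∑ v ∈ S, w v ≤ #T := by
  classical
  induction S using Finset.strongInduction with
  | H S ih =>
    rcases S.eq_empty_or_nonempty with rfl | hS
    · exact ⟨∅, Subset.rfl, by simpa using isAcyclicOn_empty, by simp⟩
    obtain ⟨v, hvS, hv⟩ := exists_sum_filter_eq_or_le hS hw₀ hw
    set S' := {u ∈ S | ¬ (u = v ∨ r u v)}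
    have hsub : S' ⊆ S := filter_subset _ _
    have hssub : S' ⊂ S := filter_ssubset.2 ⟨v, hvS, by simp⟩
    have hw' : ∀ u ∈ S', (#{x ∈ S' | r u x} + 1) * w u ≤ 1 := fun u hu =>
      le_trans (mul_le_mul_of_nonneg_right (by gcongr) (hw₀ u (hsub hu))) (hw u (hsub hu))
    obtain ⟨T, hTS', hT, hcard⟩ :=
      ih S' hssub (fun u hu => hirr u (hsub hu)) (fun u hu => hw₀ u (hsub hu)) hw'
    have hTv : ∀ x ∈ T, x ≠ v ∧ ¬ r x v := fun x hx => not_or.1 (mem_filter.1 (hTS' hx)).2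
    refine ⟨insert v T, insert_subset hvS (hTS'.trans hsub), ?_, ?_⟩
    · rw [coe_insert]
      refine hT.insert ?_
      rintro x (rfl | hx)
      exacts [hirr x hvS, (hTv x hx).2]
    · calc ∑ u ∈ S, w u
          = ∑ u ∈ S with u = v ∨ r u v, w u + ∑ u ∈ S', w u :=
            (sum_filter_add_sum_filter_not S _ w).symm
        _ ≤ 1 + #T := add_le_add hv hcard
        _ = #(insert v T) := by
            rw [card_insert_of_notMem fun hvT => (hTv v hvT).1 rfl, Nat.cast_succ, add_comm]

theorem exists_isAcyclicOn_sum_one_div_le_card [Semifield K] [LinearOrder K] [IsStrictOrderedRing K]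
    [Fintype V] (r : V → V → Prop) [DecidableRel r] (hirr : ∀ v, ¬ r v v) :
    ∃ T : Finset V, IsAcyclicOn r T ∧ ∑ v, (1 : K) / (#{x | r v x} + 1) ≤ #T := by
  obtain ⟨T, -, hT⟩ := exists_isAcyclicOn_sum_le_card (r := r)
    (w := fun v => (1 : K) / (#{x | r v x} + 1)) univ (fun v _ => hirr v)
    (fun v _ => by positivity) (fun v _ => (mul_one_div_cancel (by positivity)).le)
  exact ⟨T, hT⟩

end Greedy

/-- Every finite digraph without self-loops has an induced acyclic vertex set of
size at least `∑_v 1/(d⁺(v) + 1)`, and likewise with in-degrees. -/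
theorem stmt16 {V : Type*} [Fintype V] (r : V → V → Prop) [DecidableRel r]
    (hirr : ∀ v : V, ¬ r v v) :
    (∃ V' : Finset V,
      (∀ v : V, ¬ Relation.TransGen (fun a b : V => a ∈ V' ∧ b ∈ V' ∧ r a b) v v) ∧
      ∑ v : V, (1 : ℝ) / ((Finset.univ.filter fun w => r v w).card + 1) ≤ V'.card) ∧
    (∃ V' : Finset V,
      (∀ v : V, ¬ Relation.TransGen (fun a b : V => a ∈ V' ∧ b ∈ V' ∧ r a b) v v) ∧
      ∑ v : V, (1 : ℝ) / ((Finset.univ.filter fun w => r w v).card + 1) ≤ V'.card) := by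
  refine ⟨exists_isAcyclicOn_sum_one_div_le_card r hirr, ?_⟩
  obtain ⟨T, hT, hcard⟩ := exists_isAcyclicOn_sum_one_div_le_card (K := ℝ) (fun a b => r b a) hirr
  exact ⟨T, hT.swap, hcard⟩
end
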